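/- For any positive integers k, m and n₁, n₂, …, n_m, the discrepancy of the XOR of m independent instances of set disjointness satisfies disc(⊕_{i=1}^m DISJ_{n_i,k}, ⊗_{i=1}^m σ_{n_i,k}) ≤ ∏_{i=1}^m ( (√(2^k−1) + 1) · √(2^k−2) ) / (2√(n_i)). -/

import Mathlib

open Finset

/-- Set disjointness: `DISJ_{n,k}(X) = 1` iff `X` has no all-ones row. -/
def DISJ (n k : ℕ) (X : Fin n → Fin k → Bool) : Bool :=
  decide (∀ i, ∃ j, X i j = false)

/-- `σ⁰_{n,k}`: the uniform distribution on `n×k` Boolean matrices without an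
all-ones row. -/
noncomputable def sigma0 (n k : ℕ) (X : Fin n → Fin k → Bool) : ℝ :=
  if ∀ i, ∃ j, X i j = false then
    (1 : ℝ) /
      (Finset.univ.filter (fun Y : Fin n → Fin k → Bool => ∀ i, ∃ j, Y i j = false)).card
  else 0

/-- `σ¹_{n,k}`: the uniform distribution on `n×k` Boolean matrices with precisely one
all-ones row. -/
noncomputable def sigma1 (n k : ℕ) (X : Fin n → Fin k → Bool) : ℝ :=
  if (Finset.univ.filter (fun i : Fin n => ∀ j, X i j = true)).card = 1 then
    (1 : ℝ) /
      (Finset.univ.filter (fun Y : Fin n → Fin k → Bool =>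
        (Finset.univ.filter (fun i : Fin n => ∀ j, Y i j = true)).card = 1)).card
  else 0

/-- `σ_{n,k} = ½σ⁰_{n,k} + ½σ¹_{n,k}`. -/
noncomputable def sigmaD (n k : ℕ) (X : Fin n → Fin k → Bool) : ℝ :=
  (sigma0 n k X + sigma1 n k X) / 2

/-- `χ` is an `S`-cylinder intersection on tuples `(X₁,…,X_m)` of Boolean matrices
`X_i ∈ {0,1}^{n_i×k}`: a product over `j ∈ S` of `{0,1}`-valued functions `φ j`,
where `φ j` does not depend on the `j`-th columns of `X₁,…,X_m`. -/
def IsCylinderT {m : ℕ} (nn : Fin m → ℕ) (k : ℕ) (S : Finset (Fin k))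
    (χ : (∀ i, Fin (nn i) → Fin k → Bool) → ℝ) : Prop :=
  ∃ φ : Fin k → ((∀ i, Fin (nn i) → Fin k → Bool) → ℝ),
    (∀ j ∈ S, ∀ X, φ j X = 0 ∨ φ j X = 1) ∧
    (∀ j ∈ S, ∀ X Y, (∀ i i' j', j' ≠ j → X i i' j' = Y i i' j') → φ j X = φ j Y) ∧
    (∀ X, χ X = ∏ j ∈ S, φ j X)

/-- The discrepancy (maximum over all `S ⊆ {1,…,k}` of the `S`-discrepancy) of a
Boolean function `F` on tuples of matrices, with respect to the distribution `μ`. -/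
noncomputable def discT {m : ℕ} (nn : Fin m → ℕ) (k : ℕ)
    (F : (∀ i, Fin (nn i) → Fin k → Bool) → Bool)
    (μ : (∀ i, Fin (nn i) → Fin k → Bool) → ℝ) : ℝ :=
  sSup {t : ℝ | ∃ S : Finset (Fin k), ∃ χ : (∀ i, Fin (nn i) → Fin k → Bool) → ℝ,
    IsCylinderT nn k S χ ∧
    t = |∑ X : ∀ i, Fin (nn i) → Fin k → Bool,
          (if F X then (-1 : ℝ) else 1) * μ X * χ X|}


set_option linter.unusedSectionVars false

namespace XD

abbrev V (p : ℕ) := Fin p → Bool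

abbrev ones {p : ℕ} (x : V p) : Prop := ∀ j, x j = true

def sg (b : Bool) : ℝ := if b then -1 else 1

def MM (p : ℕ) : ℝ := 2 ^ p - 1

/-- cylinder-type functions -/
def Cyl (R : Type) (p : ℕ) (F : (R → V p) → (R → Bool) → ℝ) : Prop :=
  ∃ (f0 : (R → V p) → ℝ) (f : Fin p → (R → V p) → (R → Bool) → ℝ),
    (∀ X, |f0 X| ≤ 1) ∧ (∀ j X Y, |f j X Y| ≤ 1) ∧
    (∀ j X X' Y, (∀ r j', j' ≠ j → X r j' = X' r j') → f j X Y = f j X' Y) ∧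
    (∀ X Y, F X Y = f0 X * ∏ j, f j X Y)

lemma Cyl.mul {R : Type} {p : ℕ} {F G : (R → V p) → (R → Bool) → ℝ}
    (hF : Cyl R p F) (hG : Cyl R p G) : Cyl R p (fun X Y => F X Y * G X Y) := by
  obtain ⟨f0, f, h1, h2, h3, h4⟩ := hF
  obtain ⟨g0, g, k1, k2, k3, k4⟩ := hG
  refine ⟨fun X => f0 X * g0 X, fun j X Y => f j X Y * g j X Y, ?_, ?_, ?_, ?_⟩
  · intro X
    rw [abs_mul]
    exact mul_le_one₀ (h1 X) (abs_nonneg _) (k1 X)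
  · intro j X Y
    rw [abs_mul]
    exact mul_le_one₀ (h2 j X Y) (abs_nonneg _) (k2 j X Y)
  · intro j X X' Y h
    simp only
    rw [h3 j X X' Y h, k3 j X X' Y h]
  · intro X Y
    simp only
    rw [h4, k4, prod_mul_distrib]
    ring

/-- prepend a column -/
def cns {R : Type} {p : ℕ} (Z : R → Bool) (X : R → V p) : R → V (p+1) :=
  fun r => Fin.cons (Z r) (X r)

lemma Cyl.cons {R : Type} {p : ℕ} {F : (R → V (p+1)) → (R → Bool) → ℝ}
    (hF : Cyl R (p+1) F) : ∃ (g : (R → V p) → (R → Bool) → ℝ)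
      (H : (R → Bool) → (R → V p) → (R → Bool) → ℝ),
      (∀ X Y, |g X Y| ≤ 1) ∧ (∀ Z, Cyl R p (H Z)) ∧
      ∀ Z X Y, F (cns Z X) Y = g X Y * H Z X Y := by
  obtain ⟨f0, f, h1, h2, h3, h4⟩ := hF
  refine ⟨fun X Y => f 0 (cns (fun _ => false) X) Y,
    fun Z X Y => f0 (cns Z X) * ∏ j : Fin p, f j.succ (cns Z X) Y, ?_, ?_, ?_⟩
  · intro X Y; exact h2 _ _ _
  · intro Z
    refine ⟨fun X => f0 (cns Z X), fun j X Y => f j.succ (cns Z X) Y, fun X => h1 _,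
      fun j X Y => h2 _ _ _, ?_, fun X Y => rfl⟩
    intro j X X' Y h
    apply h3
    intro r j' hj'
    simp only [cns]
    refine Fin.cases ?_ (fun i => ?_) j' hj'
    · intro _; simp
    · intro hi
      simp only [Fin.cons_succ]
      exact h r i (fun h => hi (by rw [h]))
  · intro Z X Y
    rw [h4, Fin.prod_univ_succ, h3 0 (cns Z X) (cns (fun _ => false) X) Y]
    · ring
    · intro r j' hj'
      obtain ⟨i, rfl⟩ := Fin.exists_succ_eq.2 hj'
      simp [cns]

lemma Cyl.abs_le {R : Type} {p : ℕ} {F : (R → V p) → (R → Bool) → ℝ}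
    (hF : Cyl R p F) (X Y) : |F X Y| ≤ 1 := by
  obtain ⟨f0, f, h1, h2, h3, h4⟩ := hF
  rw [h4, abs_mul, abs_prod]
  exact mul_le_one₀ (h1 X) (prod_nonneg fun _ _ => abs_nonneg _)
    (prod_le_one (fun _ _ => abs_nonneg _) (fun j _ => h2 j X Y))

lemma ones_cons {p : ℕ} (z : Bool) (x : V p) :
    ones (Fin.cons z x : V (p+1)) ↔ z = true ∧ ones x := by
  simp [ones, Fin.forall_fin_succ]

def cnsEquiv (R : Type) (p : ℕ) : ((R → Bool) × (R → V p)) ≃ (R → V (p+1)) where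
  toFun a := cns a.1 a.2
  invFun X := (fun r => X r 0, fun r j => X r j.succ)
  left_inv a := by simp [cns]
  right_inv X := by
    funext r
    simp only [cns]
    exact Fin.cons_self_tail (X r)

lemma sum_cns {R : Type} [Fintype R] [DecidableEq R] {p : ℕ} (G : (R → V (p+1)) → ℝ) :
    ∑ X, G X = ∑ Z : R → Bool, ∑ X : R → V p, G (cns Z X) := by
  rw [← Equiv.sum_comp (cnsEquiv R p), Fintype.sum_prod_type]
  rfl

lemma sum_cons {p : ℕ} (G : V (p+1) → ℝ) :
    ∑ x, G x = ∑ z : Bool, ∑ x : V p, G (Fin.cons z x : V (p+1)) := by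
  rw [← Equiv.sum_comp (Fin.consEquiv (fun _ : Fin (p+1) => Bool)), Fintype.sum_prod_type]
  rfl

lemma sum_ones {p : ℕ} (a b : ℝ) :
    ∑ x : V p, (if ones x then a else b) = a + MM p * b := by
  have h : ∀ x : V p, (if ones x then a else b) = b + if x = (fun _ => true) then (a - b) else 0 := by
    intro x
    have : ones x ↔ x = fun _ => true := ⟨fun h => funext h, fun h j => by rw [h]⟩
    simp only [this]
    split_ifs <;> ring
  simp only [h, sum_add_distrib, sum_ite_eq', mem_univ, if_true]
  simp [MM]
  ring

lemma MM_succ (p : ℕ) : MM (p+1) = 2 * MM p + 1 := by unfold MM; ring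

lemma MM_nonneg (p : ℕ) : 0 ≤ MM p := by
  unfold MM
  have : (1:ℝ) ≤ 2 ^ p := one_le_pow₀ (by norm_num)
  linarith

section
variable {R I : Type} [Fintype R] [DecidableEq R] [Fintype I] [DecidableEq I]

def secs (lam : R → Option I) : Finset (I → R) :=
  Fintype.piFinset (fun b => univ.filter (fun r => lam r = some b))

lemma mem_secs {lam : R → Option I} {c : I → R} : c ∈ secs lam ↔ ∀ b, lam (c b) = some b := by
  simp [secs]

def kw {p : ℕ} (lam : R → Option I) (v : R → V p → Bool → ℝ) (c : I → R) (r : R) (x : V p)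
    (y : Bool) : ℝ :=
  (lam r).elim (v r x y) (fun b => if c b = r then (if ones x then 1 else 0)
    else (if ones x then 0 else 1))

def tot {p : ℕ} (lam : R → Option I) (v : R → V p → Bool → ℝ) (r : R) : ℝ :=
  (lam r).elim (∑ x, ∑ y, v r x y) (fun _ => 2 * MM p)

def fib (lam : R → Option I) (b : I) : Finset R := univ.filter (fun r => lam r = some b)

def TT {p : ℕ} (lam : R → Option I) (v : R → V p → Bool → ℝ)
    (F : (R → V p) → (R → Bool) → ℝ) : ℝ :=
  ∑ X, ∑ Y, ∑ c ∈ secs lam, (∏ r, kw lam v c r (X r) (Y r)) * (∏ b, sg (Y (c b))) * F X Y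

lemma special {lam : R → Option I} {c : I → R} (hc : c ∈ secs lam) (φ : I → ℝ) :
    ∏ r, (lam r).elim 1 (fun b => if c b = r then φ b else 1) = ∏ b, φ b := by
  rw [mem_secs] at hc
  have hinj : Function.Injective c := by
    intro a b h
    have h1 := hc a
    rw [h, hc b] at h1
    exact (Option.some_injective _ h1).symm
  symm
  apply Fintype.prod_of_injective c hinj
  · intro r hr
    rcases h : lam r with _ | b
    · rfl
    · simp only [Option.elim]
      rw [if_neg]
      rintro rfl
      exact hr ⟨b, rfl⟩
  · intro b
    simp [hc b]

end
end XD
set_option linter.unusedSectionVars false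
namespace XD
section
variable {R I : Type} [Fintype R] [DecidableEq R] [Fintype I] [DecidableEq I]

abbrev J1 (δ : I → Bool) := {b : I // δ b = true}
abbrev J0 (δ : I → Bool) := {b : I // ¬ δ b = true}

def glue (δ : I → Bool) (c1 : J1 δ → R) (c0 : J0 δ → R) : I → R :=
  fun b => if h : δ b = true then c1 ⟨b, h⟩ else c0 ⟨b, h⟩

lemma split_sum (δ : I → Bool) (G : (I → R) → ℝ) :
    ∑ c, G c = ∑ c0 : J0 δ → R, ∑ c1 : J1 δ → R, G (glue δ c1 c0) := by
  rw [← Equiv.sum_comp (Equiv.piEquivPiSubtypeProd (fun b => δ b = true) (fun _ => R)).symm,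
    Fintype.sum_prod_type, sum_comm]
  rfl

lemma glue_pos {δ : I → Bool} (c1 : J1 δ → R) (c0 : J0 δ → R) (b : J1 δ) :
    glue δ c1 c0 b.1 = c1 b := by
  simp [glue, b.2]

lemma glue_neg {δ : I → Bool} (c1 : J1 δ → R) (c0 : J0 δ → R) (b : J0 δ) :
    glue δ c1 c0 b.1 = c0 b := by
  unfold glue
  rw [dif_neg b.2]

lemma pair_split (G : (I → R) → (I → R) → ℝ) :
    ∑ c, ∑ c', G c c' = ∑ δ : I → Bool, ∑ c0 : J0 δ → R, ∑ c1 : J1 δ → R, ∑ c1' : J1 δ → R,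
      if (∀ b, c1 b ≠ c1' b) then G (glue δ c1 c0) (glue δ c1' c0) else 0 := by
  have h1 : ∀ c c', G c c' = ∑ δ : I → Bool, if (∀ b, δ b = true ↔ c b ≠ c' b) then G c c' else 0 := by
    intro c c'
    rw [Finset.sum_eq_single (fun b => decide (c b ≠ c' b))]
    · simp
    · intro δ _ hδ
      rw [if_neg]
      intro h
      apply hδ
      funext b
      have := h b
      rw [Bool.eq_iff_iff, this]
      simp
    · simp
  rw [sum_congr rfl (fun c _ => (sum_congr rfl (fun c' _ => h1 c c')).trans sum_comm), sum_comm]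
  apply sum_congr rfl
  intro δ _
  rw [split_sum δ]
  apply sum_congr rfl
  intro c0 _
  apply sum_congr rfl
  intro c1 _
  rw [split_sum δ, sum_eq_single c0]
  · apply sum_congr rfl
    intro c1' _
    congr 1
    simp only [eq_iff_iff]
    constructor
    · intro h b
      have := (h b.1).1 b.2
      rwa [glue_pos, glue_pos] at this
    · intro h b
      by_cases hb : δ b = true
      · have := h ⟨b, hb⟩
        simp [glue, hb, this]
      · simp [glue, hb]
  · intro c0' _ hne
    apply sum_eq_zero
    intro c1' _
    rw [if_neg]
    intro h
    apply hne
    funext b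
    have := h b.1
    rw [glue_neg, glue_neg] at this
    by_contra hh
    exact b.2 (this.2 (Ne.symm hh))
  · simp

noncomputable def bound {p : ℕ} (lam : R → Option I) (v : R → V p → Bool → ℝ) : ℝ :=
  (∏ b, Real.sqrt ((fib lam b).card)) * ∏ r, tot lam v r

lemma sg_not (b : Bool) : sg (!b) = - sg b := by cases b <;> simp [sg]

lemma abs_sg (b : Bool) : |sg b| = 1 := by cases b <;> simp [sg]

lemma base (lam : R → Option I) (v : R → V 0 → Bool → ℝ) (hv : ∀ r x y, 0 ≤ v r x y)
    (F : (R → V 0) → (R → Bool) → ℝ) (hF : Cyl R 0 F) : |TT lam v F| ≤ bound lam v := by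
  have hb : 0 ≤ bound lam v := by
    unfold bound
    refine mul_nonneg (prod_nonneg fun _ _ => Real.sqrt_nonneg _) (prod_nonneg fun r _ => ?_)
    unfold tot
    rcases lam r with _ | b
    · exact sum_nonneg fun x _ => sum_nonneg fun y _ => hv r x y
    · simpa using MM_nonneg 0
  by_cases hex : ∃ r0 b0, lam r0 = some b0
  · obtain ⟨r0, b0, h0⟩ := hex
    have : TT lam v F = 0 := by
      unfold TT
      apply sum_eq_zero
      intro X _
      rw [sum_comm]
      apply sum_eq_zero
      intro c hc
      by_cases hcb : c b0 = r0
      · obtain ⟨f0, f, h1, h2, h3, h4⟩ := hF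
        have hc' := mem_secs.1 hc
        set fl : (R → Bool) → (R → Bool) := fun Y => Function.update Y r0 (!(Y r0)) with hfl
        apply Finset.sum_involution (fun Y _ => fl Y)
        · intro Y _
          have e1 : ∏ r, kw lam v c r (X r) (fl Y r) = ∏ r, kw lam v c r (X r) (Y r) := by
            apply prod_congr rfl
            intro r _
            by_cases hr : r = r0
            · subst hr
              simp [kw, h0]
            · simp [hfl, hr]
          have e2 : ∏ b, sg (fl Y (c b)) = - ∏ b, sg (Y (c b)) := by
            rw [← mul_prod_erase _ _ (mem_univ b0), ← mul_prod_erase univ (fun b => sg (Y (c b))) (mem_univ b0)]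
            have : ∏ b ∈ univ.erase b0, sg (fl Y (c b)) = ∏ b ∈ univ.erase b0, sg (Y (c b)) := by
              apply prod_congr rfl
              intro b hb
              have : c b ≠ r0 := by
                intro h
                have := hc' b
                rw [h, h0] at this
                exact (ne_of_mem_erase hb) (Option.some_injective _ this).symm
              simp [hfl, this]
            rw [this, hcb]
            simp [hfl, sg_not]
          rw [e1, e2, h4, h4]
          simp
        · intro Y _ _ h
          have := congrFun h r0
          simp [hfl] at this
        · intro Y _; exact mem_univ _
        · intro Y _
          simp [hfl]
      · apply sum_eq_zero
        intro Y _
        rw [prod_eq_zero (mem_univ r0)]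
        · simp
        · simp [kw, h0, hcb]
    rw [this, abs_zero]
    exact hb
  · push Not at hex
    rcases isEmpty_or_nonempty I with hI | ⟨⟨b⟩⟩
    · have hlam : ∀ r, lam r = none := by
        intro r
        rcases h : lam r with _ | b
        · rfl
        · exact (hI.false b).elim
      have hs : secs lam = univ := by
        ext c
        simp only [mem_secs, mem_univ, iff_true]
        exact fun b => (hI.false b).elim
      unfold TT bound
      rw [hs]
      simp only [univ_unique, sum_singleton, univ_eq_empty, prod_empty, kw, tot, hlam, Option.elim, mul_one, one_mul]
      refine (abs_sum_le_sum_abs _ _).trans ?_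
      rw [prod_univ_sum, Fintype.piFinset_univ]
      apply sum_le_sum
      intro Y _
      rw [abs_mul]
      rw [abs_of_nonneg (prod_nonneg fun r _ => hv _ _ _)]
      exact mul_le_of_le_one_right (prod_nonneg fun r _ => hv _ _ _) (hF.abs_le _ _)
    · have hs : secs lam = ∅ := by
        apply eq_empty_of_forall_notMem
        intro c hc
        exact hex _ _ (mem_secs.1 hc b)
      have : TT lam v F = 0 := by simp [TT, hs]
      rw [this, abs_zero]
      exact hb
end
end XD
set_option linter.unusedSectionVars false
namespace XD
section
variable {R I : Type} [Fintype R] [DecidableEq R] [Fintype I] [DecidableEq I]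

def lam' (lam : R → Option I) (δ : I → Bool) (Z Z' : R → Bool) (r : R) :
    Option (J1 δ ⊕ J1 δ) :=
  (lam r).elim none (fun b => if h : δ b = true then
    (if Z r = true ∧ Z' r = false then some (Sum.inl ⟨b, h⟩)
      else if Z r = false ∧ Z' r = true then some (Sum.inr ⟨b, h⟩) else none) else none)

def nu {p : ℕ} (lam : R → Option I) (v : R → V (p+1) → Bool → ℝ) (r : R) (x : V p) (y : Bool) : ℝ :=
  (lam r).elim (v r (Fin.cons true x : V (p+1)) y + v r (Fin.cons false x : V (p+1)) y)
    (fun _ => if ones x then 1 else 2)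

noncomputable def kap {p : ℕ} (lam : R → Option I) (v : R → V (p+1) → Bool → ℝ) (c c' : I → R) (r : R)
    (z z' : Bool) (x : V p) (y : Bool) : ℝ :=
  kw lam v c r (Fin.cons z x : V (p+1)) y * kw lam v c' r (Fin.cons z' x : V (p+1)) y / nu lam v r x y

noncomputable def v' {p : ℕ} (lam : R → Option I) (v : R → V (p+1) → Bool → ℝ) (δ : I → Bool) (c0 : J0 δ → R)
    (Z Z' : R → Bool) (r : R) (x : V p) (y : Bool) : ℝ :=
  (lam r).elim (v r (Fin.cons (Z r) x : V (p+1)) y * v r (Fin.cons (Z' r) x : V (p+1)) y / nu lam v r x y)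
    (fun b => if (∃ h : ¬ δ b = true, c0 ⟨b, h⟩ = r) then
        (if ones x then (if Z r = true ∧ Z' r = true then 1 else 0) else 0)
      else (if ones x then (if Z r = false ∧ Z' r = false then 1 else 0) else 1/2))

/-- row totals -/
noncomputable def rho {p : ℕ} (lam : R → Option I) (v : R → V (p+1) → Bool → ℝ) (δ : I → Bool) (c0 : J0 δ → R)
    (r : R) (z z' : Bool) : ℝ :=
  (lam r).elim (∑ x : V p, ∑ y, v r (Fin.cons z x : V (p+1)) y * v r (Fin.cons z' x : V (p+1)) y / nu lam v r x y)
    (fun b => if (∃ h : ¬ δ b = true, c0 ⟨b, h⟩ = r) then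
        (if z = true ∧ z' = true then 2 else 0)
      else (if z = false ∧ z' = false then 2 + MM p else MM p))

lemma nu_nonneg {p : ℕ} (lam : R → Option I) (v : R → V (p+1) → Bool → ℝ) (hv : ∀ r x y, 0 ≤ v r x y)
    (r x y) : 0 ≤ nu lam v r x y := by
  unfold nu
  rcases lam r with _ | b
  · exact add_nonneg (hv _ _ _) (hv _ _ _)
  · simp only [Option.elim]
    split_ifs <;> norm_num

lemma v'_nonneg {p : ℕ} (lam : R → Option I) (v : R → V (p+1) → Bool → ℝ) (hv : ∀ r x y, 0 ≤ v r x y)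
    (δ c0 Z Z' r x y) : 0 ≤ v' lam v δ c0 Z Z' r x y := by
  have := nu_nonneg lam v hv r x y
  unfold v'
  rcases lam r with _ | b
  · exact div_nonneg (mul_nonneg (hv _ _ _) (hv _ _ _)) this
  · simp only [Option.elim]
    split_ifs <;> norm_num

lemma nu_sum {p : ℕ} (lam : R → Option I) (v : R → V (p+1) → Bool → ℝ) (r) :
    ∑ x, ∑ y, nu lam v r x y = tot lam v r := by
  unfold nu tot
  rcases lam r with _ | b
  · simp only [Option.elim]
    rw [sum_cons]
    simp only [Fintype.sum_bool, sum_add_distrib]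
    ring
  · simp only [Option.elim, Fintype.sum_bool, sum_add_distrib, sum_ones, MM_succ]
    ring

lemma half_tot {p : ℕ} (lam : R → Option I) (v : R → V (p+1) → Bool → ℝ) (δ : I → Bool) (c0 : J0 δ → R)
    (Z Z' : R → Bool) (r : R) :
    (if lam' lam δ Z Z' r = none then 1 else (1/2 : ℝ)) * tot (lam' lam δ Z Z') (v' lam v δ c0 Z Z') r
      = rho lam v δ c0 r (Z r) (Z' r) := by
  unfold rho tot v'
  rcases h : lam r with _ | b
  · have : lam' lam δ Z Z' r = none := by simp [lam', h]
    simp [this]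
  · simp only [Option.elim_some]
    by_cases hδ : δ b = true
    · have hn : ¬ (∃ h : ¬ δ b = true, c0 ⟨b, h⟩ = r) := fun ⟨h, _⟩ => h hδ
      simp only [hn, if_false]
      cases hz : Z r <;> cases hz' : Z' r <;> simp [lam', h, hδ, hz, hz', sum_ones, ← two_mul]
    · have : lam' lam δ Z Z' r = none := by simp [lam', h, hδ]
      simp only [this, if_true, Option.elim_none, Fintype.sum_bool, ← two_mul, ← mul_sum, one_mul]
      by_cases hc : (∃ h : ¬ δ b = true, c0 ⟨b, h⟩ = r)
      · simp only [hc, if_true, sum_ones]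
        split_ifs <;> ring
      · simp only [hc, if_false, sum_ones]
        split_ifs <;> ring

lemma lam'_inl {lam : R → Option I} {δ : I → Bool} {Z Z' : R → Bool} {r : R} {b : J1 δ} :
    lam' lam δ Z Z' r = some (Sum.inl b) ↔ lam r = some b.1 ∧ Z r = true ∧ Z' r = false := by
  unfold lam'
  rcases h : lam r with _ | b'
  · simp
  · obtain ⟨b, hb⟩ := b
    simp only [Option.elim_some]
    by_cases hδ : δ b' = true
    · simp only [hδ, dite_true]
      split_ifs with h1 h2
      · simp [h1]
      · simp [h2]
      · simp; intro _ h3; simpa [h3] using h1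
    · simp only [hδ]
      simp
      rintro rfl
      exact absurd hb hδ

lemma lam'_inr {lam : R → Option I} {δ : I → Bool} {Z Z' : R → Bool} {r : R} {b : J1 δ} :
    lam' lam δ Z Z' r = some (Sum.inr b) ↔ lam r = some b.1 ∧ Z r = false ∧ Z' r = true := by
  unfold lam'
  rcases h : lam r with _ | b'
  · simp
  · obtain ⟨b, hb⟩ := b
    simp only [Option.elim_some]
    by_cases hδ : δ b' = true
    · simp only [hδ, dite_true]
      split_ifs with h1 h2
      · simp [h1]
      · simp [h2]
      · simp; intro _ h3; simpa [h3] using h2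
    · simp only [hδ]
      simp
      rintro rfl
      exact absurd hb hδ

lemma row_id {p : ℕ} (lam : R → Option I) (v : R → V (p+1) → Bool → ℝ) (δ : I → Bool) (c0 : J0 δ → R)
    (Z Z' : R → Bool) (c1 c1' : J1 δ → R)
    (hs : Sum.elim c1 c1' ∈ secs (lam' lam δ Z Z')) (r : R) (x : V p) (y : Bool) :
    kap lam v (glue δ c1 c0) (glue δ c1' c0) r (Z r) (Z' r) x y =
      (if lam' lam δ Z Z' r = none then 1 else (1/2 : ℝ)) *
      ((lam' lam δ Z Z' r).elim 1 (fun i => if Sum.elim c1 c1' i = r then 2 else 1)) *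
      kw (lam' lam δ Z Z') (v' lam v δ c0 Z Z') (Sum.elim c1 c1') r x y := by
  rw [mem_secs] at hs
  have hl : ∀ b, lam (c1 b) = some b.1 ∧ Z (c1 b) = true ∧ Z' (c1 b) = false := fun b =>
    lam'_inl.1 (hs (Sum.inl b))
  have hr : ∀ b, lam (c1' b) = some b.1 ∧ Z (c1' b) = false ∧ Z' (c1' b) = true := fun b =>
    lam'_inr.1 (hs (Sum.inr b))
  unfold kap kw v' nu
  rcases h : lam r with _ | b
  · have : lam' lam δ Z Z' r = none := by simp [lam', h]
    simp [this]
  · simp only [Option.elim_some, ones_cons]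
    by_cases hδ : δ b = true
    · have hn : ¬ (∃ h : ¬ δ b = true, c0 ⟨b, h⟩ = r) := fun ⟨h, _⟩ => h hδ
      have hg : glue δ c1 c0 b = c1 ⟨b, hδ⟩ := glue_pos c1 c0 ⟨b, hδ⟩
      have hg' : glue δ c1' c0 b = c1' ⟨b, hδ⟩ := glue_pos c1' c0 ⟨b, hδ⟩
      have e1 := (hl ⟨b, hδ⟩).2
      have e2 := (hr ⟨b, hδ⟩).2
      simp only [hn, if_false, hg, hg']
      all_goals
        cases hz : Z r <;> cases hz' : Z' r <;> by_cases a1 : c1 ⟨b, hδ⟩ = r <;>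
          by_cases a2 : c1' ⟨b, hδ⟩ = r <;>
          first
          | (exfalso; rw [a1, hz, hz'] at e1; simp at e1; done)
          | (exfalso; rw [a2, hz, hz'] at e2; simp at e2; done)
          | (simp [lam', h, hδ, hz, hz', a1, a2]; try split_ifs <;> simp)
    · have : lam' lam δ Z Z' r = none := by simp [lam', h, hδ]
      have hg : glue δ c1 c0 b = c0 ⟨b, hδ⟩ := glue_neg c1 c0 ⟨b, hδ⟩
      have hg' : glue δ c1' c0 b = c0 ⟨b, hδ⟩ := glue_neg c1' c0 ⟨b, hδ⟩
      have he : (∃ h : ¬ δ b = true, c0 ⟨b, h⟩ = r) ↔ c0 ⟨b, hδ⟩ = r := ⟨fun ⟨_, h⟩ => h, fun h => ⟨hδ, h⟩⟩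
      simp only [this, if_true, Option.elim_none, hg, hg', he]
      by_cases a : c0 ⟨b, hδ⟩ = r <;> cases hz : Z r <;> cases hz' : Z' r <;>
        simp [a] <;> try split_ifs <;> simp

lemma kap_zero {p : ℕ} (lam : R → Option I) (v : R → V (p+1) → Bool → ℝ) (δ : I → Bool) (c0 : J0 δ → R)
    (Z Z' : R → Bool) (c1 c1' : J1 δ → R) (hne : ∀ b, c1 b ≠ c1' b)
    (hc : ∀ b, lam (c1 b) = some b.1) (hc' : ∀ b, lam (c1' b) = some b.1)
    (hs : Sum.elim c1 c1' ∉ secs (lam' lam δ Z Z')) (X : R → V p) (Y : R → Bool) :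
    ∏ r, kap lam v (glue δ c1 c0) (glue δ c1' c0) r (Z r) (Z' r) (X r) (Y r) = 0 := by
  rw [mem_secs] at hs
  push Not at hs
  obtain ⟨b | b, hb⟩ := hs
  · apply prod_eq_zero (mem_univ (c1 b))
    simp only [Sum.elim_inl, ne_eq, lam'_inl, hc b, true_and] at hb
    unfold kap kw
    simp only [hc b, Option.elim_some, ones_cons, glue_pos, if_true, (hne b).symm, if_false]
    cases hz : Z (c1 b) <;> cases hz' : Z' (c1 b) <;> by_cases hx : ones (X (c1 b)) <;> simp_all
  · apply prod_eq_zero (mem_univ (c1' b))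
    simp only [Sum.elim_inr, ne_eq, lam'_inr, hc' b, true_and] at hb
    unfold kap kw
    simp only [hc' b, Option.elim_some, ones_cons, glue_pos, if_true, (hne b), if_false]
    cases hz : Z (c1' b) <;> cases hz' : Z' (c1' b) <;> by_cases hx : ones (X (c1' b)) <;> simp_all

end
end XD
set_option linter.unusedSectionVars false
namespace XD
section
variable {R I : Type} [Fintype R] [DecidableEq R] [Fintype I] [DecidableEq I]

noncomputable def qq {p : ℕ} (lam : R → Option I) (v : R → V (p+1) → Bool → ℝ)
    (H : (R → Bool) → (R → V p) → (R → Bool) → ℝ) (Z Z' : R → Bool) (c c' : I → R) : ℝ :=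
  ∑ X : R → V p, ∑ Y : R → Bool, (∏ r, kap lam v c c' r (Z r) (Z' r) (X r) (Y r)) *
    ((∏ b, sg (Y (c b))) * ∏ b, sg (Y (c' b))) * (H Z X Y * H Z' X Y)

def secs0 (lam : R → Option I) (δ : I → Bool) : Finset (J0 δ → R) :=
  Fintype.piFinset (fun b => fib lam b.1)

def secs1 (lam : R → Option I) (δ : I → Bool) : Finset (J1 δ → R) :=
  Fintype.piFinset (fun b => fib lam b.1)

lemma mem_secs0 {lam : R → Option I} {δ : I → Bool} {c : J0 δ → R} :
    c ∈ secs0 lam δ ↔ ∀ b, lam (c b) = some b.1 := by simp [secs0, fib]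

lemma mem_secs1 {lam : R → Option I} {δ : I → Bool} {c : J1 δ → R} :
    c ∈ secs1 lam δ ↔ ∀ b, lam (c b) = some b.1 := by simp [secs1, fib]

lemma glue_mem {lam : R → Option I} {δ : I → Bool} {c1 : J1 δ → R} {c0 : J0 δ → R} :
    glue δ c1 c0 ∈ secs lam ↔ c1 ∈ secs1 lam δ ∧ c0 ∈ secs0 lam δ := by
  rw [mem_secs, mem_secs0, mem_secs1]
  constructor
  · intro h
    refine ⟨fun b => ?_, fun b => ?_⟩
    · rw [← glue_pos c1 c0 b]; exact h _
    · rw [← glue_neg c1 c0 b]; exact h _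
  · rintro ⟨h1, h0⟩ b
    by_cases hb : δ b = true
    · have := h1 ⟨b, hb⟩
      rwa [← glue_pos c1 c0 ⟨b, hb⟩] at this
    · have := h0 ⟨b, hb⟩
      rwa [← glue_neg c1 c0 ⟨b, hb⟩] at this

lemma sg_sq (b : Bool) : sg b * sg b = 1 := by cases b <;> simp [sg]

lemma sg_glue (δ : I → Bool) (c1 c1' : J1 δ → R) (c0 : J0 δ → R) (Y : R → Bool) :
    (∏ b, sg (Y (glue δ c1 c0 b))) * ∏ b, sg (Y (glue δ c1' c0 b)) =
      ∏ i, sg (Y (Sum.elim c1 c1' i)) := by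
  rw [← Fintype.prod_subtype_mul_prod_subtype (fun b => δ b = true),
    ← Fintype.prod_subtype_mul_prod_subtype (fun b => δ b = true) (fun b => sg (Y (glue δ c1' c0 b))),
    Fintype.prod_sum_type]
  simp only [glue_pos, glue_neg, Sum.elim_inl, Sum.elim_inr]
  have : (∏ b : J0 δ, sg (Y (c0 b))) * (∏ b : J0 δ, sg (Y (c0 b))) = 1 := by
    rw [← prod_mul_distrib]
    simp [sg_sq]
  calc _ = (∏ b : J1 δ, sg (Y (c1 b))) * (∏ b : J1 δ, sg (Y (c1' b))) *
        ((∏ b : J0 δ, sg (Y (c0 b))) * (∏ b : J0 δ, sg (Y (c0 b)))) := by ring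
    _ = _ := by rw [this, mul_one]

lemma inner_eq {p : ℕ} (lam : R → Option I) (v : R → V (p+1) → Bool → ℝ)
    (H : (R → Bool) → (R → V p) → (R → Bool) → ℝ) (Z Z' : R → Bool) (δ : I → Bool) (c0 : J0 δ → R)
    (h0 : c0 ∈ secs0 lam δ) :
    (∑ c1 : J1 δ → R, ∑ c1' : J1 δ → R, if (∀ b, c1 b ≠ c1' b) then
      (if glue δ c1 c0 ∈ secs lam ∧ glue δ c1' c0 ∈ secs lam then
        qq lam v H Z Z' (glue δ c1 c0) (glue δ c1' c0) else 0) else 0)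
    = (∏ _i : J1 δ ⊕ J1 δ, (2:ℝ)) * (∏ r, (if lam' lam δ Z Z' r = none then 1 else (1/2 : ℝ))) *
      TT (lam' lam δ Z Z') (v' lam v δ c0 Z Z') (fun X Y => H Z X Y * H Z' X Y) := by
  have key : ∀ c1 c1' : J1 δ → R, (if (∀ b, c1 b ≠ c1' b) then
      (if glue δ c1 c0 ∈ secs lam ∧ glue δ c1' c0 ∈ secs lam then
        qq lam v H Z Z' (glue δ c1 c0) (glue δ c1' c0) else 0) else 0) =
      if Sum.elim c1 c1' ∈ secs (lam' lam δ Z Z') then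
      (∏ _i : J1 δ ⊕ J1 δ, (2:ℝ)) * (∏ r, (if lam' lam δ Z Z' r = none then 1 else (1/2 : ℝ))) *
      ∑ X : R → V p, ∑ Y : R → Bool, (∏ r, kw (lam' lam δ Z Z') (v' lam v δ c0 Z Z') (Sum.elim c1 c1') r (X r) (Y r)) *
        (∏ i, sg (Y (Sum.elim c1 c1' i))) * (H Z X Y * H Z' X Y) else 0 := by
    intro c1 c1'
    by_cases hs : Sum.elim c1 c1' ∈ secs (lam' lam δ Z Z')
    · have hs' := mem_secs.1 hs
      have hl : ∀ b, lam (c1 b) = some b.1 ∧ Z (c1 b) = true ∧ Z' (c1 b) = false := fun b =>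
        lam'_inl.1 (hs' (Sum.inl b))
      have hr : ∀ b, lam (c1' b) = some b.1 ∧ Z (c1' b) = false ∧ Z' (c1' b) = true := fun b =>
        lam'_inr.1 (hs' (Sum.inr b))
      have hne : ∀ b, c1 b ≠ c1' b := by
        intro b h
        have h1 := (hl b).2.1
        rw [h, (hr b).2.1] at h1
        simp at h1
      rw [if_pos hne, if_pos hs, if_pos ⟨glue_mem.2 ⟨mem_secs1.2 fun b => (hl b).1, h0⟩,
        glue_mem.2 ⟨mem_secs1.2 fun b => (hr b).1, h0⟩⟩]
      unfold qq
      rw [mul_sum]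
      apply sum_congr rfl
      intro X _
      rw [mul_sum]
      apply sum_congr rfl
      intro Y _
      rw [sg_glue, prod_congr rfl (fun r _ => row_id lam v δ c0 Z Z' c1 c1' hs r (X r) (Y r)),
        prod_mul_distrib, prod_mul_distrib, special hs (fun _ => (2:ℝ))]
      ring
    · rw [if_neg hs]
      split_ifs with hne hm
      · obtain ⟨m1, m2⟩ := hm
        have k1 := mem_secs1.1 (glue_mem.1 m1).1
        have k2 := mem_secs1.1 (glue_mem.1 m2).1
        unfold qq
        apply sum_eq_zero
        intro X _
        apply sum_eq_zero
        intro Y _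
        rw [kap_zero lam v δ c0 Z Z' c1 c1' hne k1 k2 hs]
        simp
      · rfl
      · rfl
  rw [sum_congr rfl (fun c1 _ => sum_congr rfl (fun c1' _ => key c1 c1'))]
  unfold TT
  rw [← Fintype.sum_prod_type']
  rw [← Equiv.sum_comp (Equiv.sumArrowEquivProdArrow (J1 δ) (J1 δ) R)]
  have e : ∀ c : J1 δ ⊕ J1 δ → R, Sum.elim (Equiv.sumArrowEquivProdArrow (J1 δ) (J1 δ) R c).1
      (Equiv.sumArrowEquivProdArrow (J1 δ) (J1 δ) R c).2 = c := by
    intro c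
    funext i
    rcases i with i | i <;> rfl
  simp only [e]
  rw [← sum_filter, filter_mem_eq_inter, univ_inter, ← mul_sum]
  congr 1
  rw [sum_comm]
  apply sum_congr rfl
  intro X _
  rw [sum_comm]

lemma inner_bound {p : ℕ} (ih : ∀ (R I : Type) [Fintype R] [DecidableEq R] [Fintype I] [DecidableEq I]
      (lam : R → Option I) (v : R → V p → Bool → ℝ) (_ : ∀ r x y, 0 ≤ v r x y)
      (F : (R → V p) → (R → Bool) → ℝ) (_ : Cyl R p F), |TT lam v F| ≤ bound lam v)
    (lam : R → Option I) (v : R → V (p+1) → Bool → ℝ) (hv : ∀ r x y, 0 ≤ v r x y)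
    (H : (R → Bool) → (R → V p) → (R → Bool) → ℝ) (hH : ∀ Z, Cyl R p (H Z))
    (Z Z' : R → Bool) (δ : I → Bool) (c0 : J0 δ → R)
    (h0 : c0 ∈ secs0 lam δ) :
    (∑ c1 : J1 δ → R, ∑ c1' : J1 δ → R, if (∀ b, c1 b ≠ c1' b) then
      (if glue δ c1 c0 ∈ secs lam ∧ glue δ c1' c0 ∈ secs lam then
        qq lam v H Z Z' (glue δ c1 c0) (glue δ c1' c0) else 0) else 0)
    ≤ ∑ e1 ∈ secs1 lam δ, (∏ b : J1 δ, if Z (e1 b) = Z' (e1 b) then 0 else (2:ℝ)) *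
        ∏ r, rho lam v δ c0 r (Z r) (Z' r) := by
  rw [inner_eq lam v H Z Z' δ c0 h0, ← sum_mul]
  have hT := (le_abs_self _).trans (ih R _ (lam' lam δ Z Z') (v' lam v δ c0 Z Z') (v'_nonneg lam v hv δ c0 Z Z') _
    ((hH Z).mul (hH Z')))
  refine (mul_le_mul_of_nonneg_left hT ?_).trans ?_
  · refine mul_nonneg (prod_nonneg fun _ _ => by norm_num) (prod_nonneg fun _ _ => ?_)
    split_ifs <;> norm_num
  unfold bound
  have hrho : (∏ r, rho lam v δ c0 r (Z r) (Z' r)) =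
      (∏ r, (if lam' lam δ Z Z' r = none then 1 else (1/2 : ℝ))) *
      ∏ r, tot (lam' lam δ Z Z') (v' lam v δ c0 Z Z') r := by
    rw [← prod_mul_distrib]
    exact prod_congr rfl fun r _ => (half_tot lam v δ c0 Z Z' r).symm
  have hnn : 0 ≤ ∏ r, rho lam v δ c0 r (Z r) (Z' r) := by
    rw [hrho]
    refine mul_nonneg (prod_nonneg fun _ _ => ?_) (prod_nonneg fun r _ => ?_)
    · split_ifs <;> norm_num
    · unfold tot
      rcases lam' lam δ Z Z' r with _ | b
      · exact sum_nonneg fun x _ => sum_nonneg fun y _ => v'_nonneg lam v hv δ c0 Z Z' r x y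
      · simpa using MM_nonneg p
  have hle : (∏ _i : J1 δ ⊕ J1 δ, (2:ℝ)) * (∏ i, Real.sqrt ((fib (lam' lam δ Z Z') i).card)) ≤
      ∑ e1 ∈ secs1 lam δ, ∏ b : J1 δ, if Z (e1 b) = Z' (e1 b) then 0 else (2:ℝ) := by
    have := prod_univ_sum (fun b : J1 δ => fib lam b.1) (fun _ r => if Z r = Z' r then 0 else (2:ℝ))
    unfold secs1
    rw [← this, ← prod_mul_distrib, Fintype.prod_sum_type, ← prod_mul_distrib]
    apply prod_le_prod
    · intro b _; positivity
    · intro b _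
      have e : ∑ r ∈ fib lam b.1, (if Z r = Z' r then 0 else (2:ℝ)) =
          2 * ((fib (lam' lam δ Z Z') (Sum.inl b)).card : ℝ) + 2 * ((fib (lam' lam δ Z Z') (Sum.inr b)).card : ℝ) := by
        simp only [fib, lam'_inl, lam'_inr, card_filter, sum_filter]
        push_cast
        rw [mul_sum, mul_sum, ← sum_add_distrib]
        apply sum_congr rfl
        intro r _
        by_cases h : lam r = some b.1 <;> cases Z r <;> cases Z' r <;> simp [h]
      rw [e]
      have s1 := Real.sq_sqrt (Nat.cast_nonneg (α := ℝ) (fib (lam' lam δ Z Z') (Sum.inl b)).card)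
      have s2 := Real.sq_sqrt (Nat.cast_nonneg (α := ℝ) (fib (lam' lam δ Z Z') (Sum.inr b)).card)
      nlinarith [sq_nonneg (Real.sqrt ((fib (lam' lam δ Z Z') (Sum.inl b)).card) - Real.sqrt ((fib (lam' lam δ Z Z') (Sum.inr b)).card))]
  calc _ = ((∏ _i : J1 δ ⊕ J1 δ, (2:ℝ)) * (∏ i, Real.sqrt ((fib (lam' lam δ Z Z') i).card))) *
        ∏ r, rho lam v δ c0 r (Z r) (Z' r) := by rw [hrho]; ring
    _ ≤ _ := mul_le_mul_of_nonneg_right hle hnn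

end
end XD
set_option linter.unusedSectionVars false
namespace XD
section
variable {R I : Type} [Fintype R] [DecidableEq R] [Fintype I] [DecidableEq I]

lemma sum_prod_fun {A : Type} [Fintype A] [DecidableEq A] (f : R → A → ℝ) :
    ∑ Z : R → A, ∏ r, f r (Z r) = ∏ r, ∑ z, f r z := by
  rw [prod_univ_sum, Fintype.piFinset_univ]

lemma sum2_prod {A B : Type} [Fintype A] [DecidableEq A] [Fintype B] [DecidableEq B] (f : R → A → B → ℝ) :
    ∑ Z : R → A, ∑ Z' : R → B, ∏ r, f r (Z r) (Z' r) = ∏ r, ∑ z, ∑ z', f r z z' := by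
  rw [← sum_prod_fun]
  apply sum_congr rfl
  intro Z _
  rw [sum_prod_fun (fun r z' => f r (Z r) z')]

noncomputable def rt {p : ℕ} (lam : R → Option I) (v : R → V (p+1) → Bool → ℝ) (δ : I → Bool) (e : I → R)
    (r : R) (z z' : Bool) : ℝ :=
  (lam r).elim (∑ x : V p, ∑ y, v r (Fin.cons z x : V (p+1)) y * v r (Fin.cons z' x : V (p+1)) y / nu lam v r x y)
    (fun b => if e b = r then
        (if δ b = true then (if z = z' then 0 else 2 * MM p) else (if z = true ∧ z' = true then 2 else 0))
      else (if z = false ∧ z' = false then 2 + MM p else MM p))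

lemma rt_eq {p : ℕ} (lam : R → Option I) (v : R → V (p+1) → Bool → ℝ) (δ : I → Bool)
    (e1 : J1 δ → R) (c0 : J0 δ → R) (Z Z' : R → Bool) (hm : glue δ e1 c0 ∈ secs lam) :
    (∏ b : J1 δ, if Z (e1 b) = Z' (e1 b) then 0 else (2:ℝ)) *
        ∏ r, rho lam v δ c0 r (Z r) (Z' r) = ∏ r, rt lam v δ (glue δ e1 c0) r (Z r) (Z' r) := by
  have h := special hm (fun b => if δ b = true then
    (if Z (glue δ e1 c0 b) = Z' (glue δ e1 c0 b) then 0 else (2:ℝ)) else 1)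
  have h2 : ∏ b, (if δ b = true then
    (if Z (glue δ e1 c0 b) = Z' (glue δ e1 c0 b) then 0 else (2:ℝ)) else 1) =
    ∏ b : J1 δ, if Z (e1 b) = Z' (e1 b) then 0 else (2:ℝ) := by
    rw [← Fintype.prod_subtype_mul_prod_subtype (fun b => δ b = true)]
    rw [Fintype.prod_congr _ (fun b : J1 δ => if Z (e1 b) = Z' (e1 b) then 0 else (2:ℝ))]
    · have : ∏ b : J0 δ, (if δ b.1 = true then
          (if Z (glue δ e1 c0 b.1) = Z' (glue δ e1 c0 b.1) then 0 else (2:ℝ)) else 1) = 1 :=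
        Fintype.prod_eq_one _ fun b => if_neg b.2
      rw [this, mul_one]
    · intro b
      rw [if_pos b.2, glue_pos]
  rw [← h2, ← h, ← prod_mul_distrib]
  apply prod_congr rfl
  intro r _
  unfold rho rt
  rcases lam r with _ | b
  · simp
  · simp only [Option.elim_some]
    by_cases hb : δ b = true
    · have : ¬ ∃ h : ¬ δ b = true, c0 ⟨b, h⟩ = r := fun ⟨h, _⟩ => h hb
      simp only [this, if_false, hb, if_true]
      by_cases he : glue δ e1 c0 b = r
      · simp only [he, if_true]
        cases Z r <;> cases Z' r <;> simp
      · simp [he]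
    · have : (∃ h : ¬ δ b = true, c0 ⟨b, h⟩ = r) ↔ glue δ e1 c0 b = r := by
        unfold glue
        simp [hb]
      by_cases hg : glue δ e1 c0 b = r
      · rw [if_pos (this.2 hg), if_pos hg, if_pos hg, if_neg hb, if_neg hb, one_mul]
      · rw [if_neg (fun h => hg (this.1 h)), if_neg hg, if_neg hg, one_mul]

lemma rt_sum {p : ℕ} (lam : R → Option I) (v : R → V (p+1) → Bool → ℝ) (δ : I → Bool)
    (e : I → R) (r : R) : ∑ z, ∑ z', rt lam v δ e r z z' =
      (lam r).elim (tot lam v r) (fun b => if e b = r then 1 else 2 * MM (p+1)) *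
      (lam r).elim 1 (fun b => if e b = r then (if δ b = true then 4 * MM p else 2) else 1) := by
  rw [← nu_sum]
  unfold rt nu
  rcases lam r with _ | b
  · simp only [Option.elim_none, mul_one, Fintype.sum_bool, ← sum_add_distrib]
    apply sum_congr rfl
    intro x _
    have key : ∀ a b : ℝ, a * a / (a + b) + a * b / (a+b) + (b * a / (a+b) + b * b / (a+b)) = a + b := by
      intro a b
      by_cases h : a + b = 0
      · simp [h]
      · field_simp
    linear_combination key (v r (Fin.cons true x) true) (v r (Fin.cons false x) true) +
      key (v r (Fin.cons true x) false) (v r (Fin.cons false x) false)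
  · simp only [Option.elim_some, MM_succ, Fintype.sum_bool]
    by_cases h1 : e b = r <;> by_cases h2 : δ b = true <;> simp [h1, h2] <;> ring

lemma per_e {p : ℕ} (lam : R → Option I) (v : R → V (p+1) → Bool → ℝ)
    (e : I → R) (he : e ∈ secs lam) : ∑ δ : I → Bool, ∑ Z : R → Bool, ∑ Z' : R → Bool,
      ∏ r, rt lam v δ e r (Z r) (Z' r) = ∏ r, tot lam v r := by
  have h1 : ∀ δ : I → Bool, ∑ Z : R → Bool, ∑ Z' : R → Bool, ∏ r, rt lam v δ e r (Z r) (Z' r) =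
      (∏ r, (lam r).elim (tot lam v r) (fun b => if e b = r then 1 else 2 * MM (p+1))) *
       ∏ b, (if δ b = true then 4 * MM p else 2) := by
    intro δ
    rw [sum2_prod (fun r z z' => rt lam v δ e r z z'), ← special he, ← prod_mul_distrib]
    exact prod_congr rfl fun r _ => rt_sum lam v δ e r
  rw [sum_congr rfl fun δ _ => h1 δ, ← mul_sum,
    sum_prod_fun (fun _ (d : Bool) => if d = true then 4 * MM p else 2), ← special he, ← prod_mul_distrib]
  apply prod_congr rfl
  intro r _
  unfold tot
  rcases lam r with _ | b
  · simp
  · simp only [Option.elim_some, Fintype.sum_bool, MM_succ]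
    split_ifs <;> simp_all <;> ring

lemma card_secs (lam : R → Option I) : ((secs lam).card : ℝ) = ∏ b, ((fib lam b).card : ℝ) := by
  unfold secs fib
  rw [Fintype.card_piFinset]
  push_cast
  rfl

lemma Qbound {p : ℕ} (ih : ∀ (R I : Type) [Fintype R] [DecidableEq R] [Fintype I] [DecidableEq I]
      (lam : R → Option I) (v : R → V p → Bool → ℝ) (_ : ∀ r x y, 0 ≤ v r x y)
      (F : (R → V p) → (R → Bool) → ℝ) (_ : Cyl R p F), |TT lam v F| ≤ bound lam v)
    (lam : R → Option I) (v : R → V (p+1) → Bool → ℝ) (hv : ∀ r x y, 0 ≤ v r x y)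
    (H : (R → Bool) → (R → V p) → (R → Bool) → ℝ) (hH : ∀ Z, Cyl R p (H Z)) :
    ∑ Z, ∑ Z', ∑ c, ∑ c', (if c ∈ secs lam ∧ c' ∈ secs lam then qq lam v H Z Z' c c' else 0) ≤
      (∏ b, ((fib lam b).card : ℝ)) * ∏ r, tot lam v r := by
  have h1 : ∀ Z Z' : R → Bool, ∑ c, ∑ c', (if c ∈ secs lam ∧ c' ∈ secs lam then qq lam v H Z Z' c c' else 0) ≤
      ∑ δ : I → Bool, ∑ e, if e ∈ secs lam then ∏ r, rt lam v δ e r (Z r) (Z' r) else 0 := by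
    intro Z Z'
    rw [pair_split]
    apply sum_le_sum
    intro δ _
    rw [split_sum δ]
    apply sum_le_sum
    intro c0 _
    by_cases h0 : c0 ∈ secs0 lam δ
    · refine (inner_bound ih lam v hv H hH Z Z' δ c0 h0).trans (le_of_eq ?_)
      rw [← sum_filter_add_sum_filter_not univ (fun e1 => e1 ∈ secs1 lam δ), filter_mem_eq_inter, univ_inter]
      rw [sum_eq_zero (s := univ.filter _), add_zero]
      · apply sum_congr rfl
        intro e1 h1
        have := (glue_mem (c1 := e1) (c0 := c0)).2 ⟨h1, h0⟩
        rw [if_pos this, rt_eq lam v δ e1 c0 Z Z' this]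
      · intro e1 h1
        rw [mem_filter] at h1
        rw [if_neg]
        intro h
        exact h1.2 (glue_mem.1 h).1
    · apply le_of_eq
      rw [sum_eq_zero, sum_eq_zero]
      · intro c1 _
        rw [if_neg]
        intro h
        exact h0 (glue_mem.1 h).2
      · intro c1 _
        apply sum_eq_zero
        intro c1' _
        split_ifs with h2 h3
        · exact absurd (glue_mem.1 h3.1).2 h0
        · rfl
        · rfl
  refine (sum_le_sum fun Z _ => sum_le_sum fun Z' _ => h1 Z Z').trans (le_of_eq ?_)
  have h2 : ∑ Z : R → Bool, ∑ Z' : R → Bool, ∑ δ : I → Bool, ∑ e : I → R,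
      (if e ∈ secs lam then ∏ r, rt lam v δ e r (Z r) (Z' r) else 0) =
      ∑ e : I → R, if e ∈ secs lam then ∏ r, tot lam v r else 0 := by
    calc _ = ∑ Z : R → Bool, ∑ δ : I → Bool, ∑ Z' : R → Bool, ∑ e : I → R,
          (if e ∈ secs lam then ∏ r, rt lam v δ e r (Z r) (Z' r) else 0) :=
          sum_congr rfl fun Z _ => sum_comm
      _ = ∑ δ : I → Bool, ∑ Z : R → Bool, ∑ e : I → R, ∑ Z' : R → Bool,
          (if e ∈ secs lam then ∏ r, rt lam v δ e r (Z r) (Z' r) else 0) := by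
          rw [sum_comm]
          exact sum_congr rfl fun δ _ => sum_congr rfl fun Z _ => sum_comm
      _ = ∑ δ : I → Bool, ∑ e : I → R, ∑ Z : R → Bool, ∑ Z' : R → Bool,
          (if e ∈ secs lam then ∏ r, rt lam v δ e r (Z r) (Z' r) else 0) :=
          sum_congr rfl fun δ _ => sum_comm
      _ = ∑ e : I → R, ∑ δ : I → Bool, ∑ Z : R → Bool, ∑ Z' : R → Bool,
          (if e ∈ secs lam then ∏ r, rt lam v δ e r (Z r) (Z' r) else 0) := sum_comm
      _ = _ := by
          apply sum_congr rfl
          intro e _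
          by_cases he : e ∈ secs lam
          · simp only [he, if_true]
            exact per_e lam v e he
          · simp [he]
  rw [h2, ← sum_filter, filter_mem_eq_inter, univ_inter, sum_const, nsmul_eq_mul, card_secs]

end
end XD
set_option linter.unusedSectionVars false
namespace XD
section
variable {R I : Type} [Fintype R] [DecidableEq R] [Fintype I] [DecidableEq I]

noncomputable def tz {p : ℕ} (lam : R → Option I) (v : R → V (p+1) → Bool → ℝ)
    (H : (R → Bool) → (R → V p) → (R → Bool) → ℝ) (X : R → V p) (Y : R → Bool)
    (Z : R → Bool) (c : I → R) : ℝ :=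
  if c ∈ secs lam then (∏ r, kw lam v c r (Fin.cons (Z r) (X r) : V (p+1)) (Y r)) * (∏ b, sg (Y (c b))) *
    H Z X Y else 0

noncomputable def SS {p : ℕ} (lam : R → Option I) (v : R → V (p+1) → Bool → ℝ)
    (H : (R → Bool) → (R → V p) → (R → Bool) → ℝ) (X : R → V p) (Y : R → Bool) : ℝ :=
  ∑ Z, ∑ c, tz lam v H X Y Z c

lemma TT_eq {p : ℕ} (lam : R → Option I) (v : R → V (p+1) → Bool → ℝ)
    (F : (R → V (p+1)) → (R → Bool) → ℝ) (g : (R → V p) → (R → Bool) → ℝ)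
    (H : (R → Bool) → (R → V p) → (R → Bool) → ℝ)
    (h : ∀ Z X Y, F (cns Z X) Y = g X Y * H Z X Y) :
    TT lam v F = ∑ X, ∑ Y, g X Y * SS lam v H X Y := by
  unfold TT
  rw [sum_cns, sum_comm]
  apply sum_congr rfl
  intro X _
  rw [sum_comm]
  apply sum_congr rfl
  intro Y _
  unfold SS
  rw [mul_sum]
  apply sum_congr rfl
  intro Z _
  unfold tz
  rw [← sum_filter, filter_mem_eq_inter, univ_inter, mul_sum]
  apply sum_congr rfl
  intro c _
  rw [h]
  simp only [cns]
  ring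

lemma kw_le {p : ℕ} (lam : R → Option I) (v : R → V (p+1) → Bool → ℝ) (hv : ∀ r x y, 0 ≤ v r x y)
    (c : I → R) (r z) (x : V p) (y) (h : nu lam v r x y = 0) : kw lam v c r (Fin.cons z x : V (p+1)) y = 0 := by
  unfold nu at h
  unfold kw
  rcases hl : lam r with _ | b <;> rw [hl] at h
  · simp only [Option.elim_none] at *
    have h1 := hv r (Fin.cons true x : V (p+1)) y
    have h2 := hv r (Fin.cons false x : V (p+1)) y
    cases z <;> linarith
  · simp only [Option.elim_some] at h
    split_ifs at h <;> norm_num at h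

lemma SS_zero {p : ℕ} (lam : R → Option I) (v : R → V (p+1) → Bool → ℝ) (hv : ∀ r x y, 0 ≤ v r x y)
    (H : (R → Bool) → (R → V p) → (R → Bool) → ℝ) (X : R → V p) (Y : R → Bool)
    (h : ∏ r, nu lam v r (X r) (Y r) = 0) : SS lam v H X Y = 0 := by
  rw [prod_eq_zero_iff] at h
  obtain ⟨r, _, hr⟩ := h
  unfold SS
  refine sum_eq_zero fun Z _ => sum_eq_zero fun c _ => ?_
  unfold tz
  rw [prod_eq_zero (mem_univ r) (kw_le lam v hv c r _ _ _ hr)]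
  simp

lemma SS_sq {p : ℕ} (lam : R → Option I) (v : R → V (p+1) → Bool → ℝ)
    (H : (R → Bool) → (R → V p) → (R → Bool) → ℝ) :
    ∑ X, ∑ Y, (SS lam v H X Y)^2 / ∏ r, nu lam v r (X r) (Y r) =
    ∑ Z, ∑ Z', ∑ c, ∑ c', (if c ∈ secs lam ∧ c' ∈ secs lam then qq lam v H Z Z' c c' else 0) := by
  have h1 : ∀ X Y, (SS lam v H X Y)^2 / ∏ r, nu lam v r (X r) (Y r) =
      ∑ Z, ∑ Z', ∑ c, ∑ c', tz lam v H X Y Z c * tz lam v H X Y Z' c' / ∏ r, nu lam v r (X r) (Y r) := by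
    intro X Y
    unfold SS
    rw [sq, sum_mul_sum]
    simp only [sum_mul_sum, sum_div]
  have h2 : ∀ Z Z' c c', (if c ∈ secs lam ∧ c' ∈ secs lam then qq lam v H Z Z' c c' else 0) =
      ∑ X, ∑ Y, tz lam v H X Y Z c * tz lam v H X Y Z' c' / ∏ r, nu lam v r (X r) (Y r) := by
    intro Z Z' c c'
    unfold tz
    by_cases a : c ∈ secs lam <;> by_cases b : c' ∈ secs lam
    · simp only [a, b, and_self, if_true]
      unfold qq kap
      refine sum_congr rfl fun X _ => sum_congr rfl fun Y _ => ?_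
      rw [prod_div_distrib, prod_mul_distrib]
      ring
    all_goals simp [a, b]
  simp only [h1, h2]
  calc _ = ∑ a : (R → V p) × (R → Bool), ∑ b : (R → Bool) × (R → Bool) × (I → R) × (I → R),
      tz lam v H a.1 a.2 b.1 b.2.2.1 * tz lam v H a.1 a.2 b.2.1 b.2.2.2 / ∏ r, nu lam v r (a.1 r) (a.2 r) := by
        simp only [Fintype.sum_prod_type]
    _ = _ := by
        rw [sum_comm]
        simp only [Fintype.sum_prod_type]

lemma tot_nonneg {p : ℕ} (lam : R → Option I) (v : R → V p → Bool → ℝ) (hv : ∀ r x y, 0 ≤ v r x y) (r) :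
    0 ≤ tot lam v r := by
  unfold tot
  rcases lam r with _ | b
  · exact sum_nonneg fun x _ => sum_nonneg fun y _ => hv r x y
  · simpa using MM_nonneg p

theorem mainBound (p : ℕ) : ∀ (R I : Type) [Fintype R] [DecidableEq R] [Fintype I] [DecidableEq I]
      (lam : R → Option I) (v : R → V p → Bool → ℝ) (_ : ∀ r x y, 0 ≤ v r x y)
      (F : (R → V p) → (R → Bool) → ℝ) (_ : Cyl R p F), |TT lam v F| ≤ bound lam v := by
  induction p with
  | zero =>
    intro R I _ _ _ _ lam v hv F hF
    exact base lam v hv F hF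
  | succ p ih =>
    intro R I _ _ _ _ lam v hv F hF
    obtain ⟨g, H, hg, hH, h⟩ := hF.cons
    rw [TT_eq lam v F g H h]
    have hN : ∀ (X : R → V p) (Y : R → Bool), 0 ≤ ∏ r, nu lam v r (X r) (Y r) := fun X Y =>
      prod_nonneg fun r _ => nu_nonneg lam v hv r _ _
    have hCS : (∑ a : (R → V p) × (R → Bool), |SS lam v H a.1 a.2|)^2 ≤
        (∑ a : (R → V p) × (R → Bool), ∏ r, nu lam v r (a.1 r) (a.2 r)) *
        ∑ a : (R → V p) × (R → Bool), (SS lam v H a.1 a.2)^2 / ∏ r, nu lam v r (a.1 r) (a.2 r) := by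
      apply Finset.sum_sq_le_sum_mul_sum_of_sq_eq_mul
      · intro a _; exact hN _ _
      · intro a _; exact div_nonneg (sq_nonneg _) (hN _ _)
      · intro a _
        rw [sq_abs]
        by_cases h0 : ∏ r, nu lam v r (a.1 r) (a.2 r) = 0
        · rw [SS_zero lam v hv H _ _ h0]; simp
        · field_simp
    simp only [Fintype.sum_prod_type] at hCS
    rw [SS_sq, sum2_prod (fun r x y => nu lam v r x y)] at hCS
    simp only [nu_sum] at hCS
    have hQ := Qbound ih lam v hv H hH
    have hP : 0 ≤ ∏ r, tot lam v r := prod_nonneg fun r _ => tot_nonneg lam v hv r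
    have hle : |∑ X, ∑ Y, g X Y * SS lam v H X Y| ≤ ∑ X, ∑ Y, |SS lam v H X Y| := by
      refine (abs_sum_le_sum_abs _ _).trans (sum_le_sum fun X _ => ?_)
      refine (abs_sum_le_sum_abs _ _).trans (sum_le_sum fun Y _ => ?_)
      rw [abs_mul]
      exact mul_le_of_le_one_left (abs_nonneg _) (hg X Y)
    refine hle.trans ?_
    unfold bound
    apply abs_le_of_sq_le_sq' _ _ |>.2
    · refine hCS.trans ((mul_le_mul_of_nonneg_left hQ hP).trans (le_of_eq ?_))
      rw [mul_pow, ← prod_pow]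
      simp only [Real.sq_sqrt (Nat.cast_nonneg _)]
      ring
    · exact mul_nonneg (prod_nonneg fun _ _ => Real.sqrt_nonneg _) hP

end
end XD
set_option linter.unusedSectionVars false
namespace XD

lemma exact_one {n : ℕ} (P : Fin n → Prop) [DecidablePred P] :
    ∑ i, ∏ r, (if r = i then (if P r then 1 else 0) else (if P r then 0 else (1:ℝ))) =
      if (univ.filter P).card = 1 then 1 else 0 := by
  split_ifs with h
  · rw [card_eq_one] at h
    obtain ⟨a, ha⟩ := h
    have hP : ∀ r, P r ↔ r = a := fun r => by
      have := congrArg (fun s => r ∈ s) ha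
      simpa using this
    rw [sum_eq_single a]
    · apply prod_eq_one
      intro r _
      simp only [hP]
      split_ifs <;> rfl
    · intro b _ hb
      apply prod_eq_zero (mem_univ b)
      simp [hP, hb]
    · simp
  · apply sum_eq_zero
    intro i _
    by_contra hne
    apply h
    rw [card_eq_one]
    refine ⟨i, ?_⟩
    have hne := prod_ne_zero_iff.1 hne
    ext r
    have := hne r (mem_univ r)
    simp only [mem_filter, mem_univ, true_and, mem_singleton]
    by_cases h1 : r = i <;> by_cases h2 : P r <;> simp [h1, h2] at this ⊢
    · rwa [← h1]
    · exact this

lemma not_ones {k : ℕ} (x : V k) : (∃ j, x j = false) ↔ ¬ ones x := by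
  simp [ones]

lemma ind_zero {n k : ℕ} (X : Fin n → V k) :
    (if ∀ i, ∃ j, X i j = false then (1:ℝ) else 0) = ∏ i, if ones (X i) then 0 else 1 := by
  split_ifs with h
  · symm
    apply prod_eq_one
    intro i _
    rw [if_neg ((not_ones _).1 (h i))]
  · rw [not_forall] at h
    obtain ⟨i, hi⟩ := h
    rw [not_ones, not_not] at hi
    symm
    apply prod_eq_zero (mem_univ i)
    rw [if_pos hi]

lemma card0 (n k : ℕ) :
    ((Finset.univ.filter (fun Y : Fin n → Fin k → Bool => ∀ i, ∃ j, Y i j = false)).card : ℝ) = MM k ^ n := by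
  rw [card_filter]
  push_cast
  rw [sum_congr rfl (fun X _ => ind_zero X), sum_prod_fun (fun _ (x : V k) => if ones x then 0 else (1:ℝ))]
  simp [sum_ones]

lemma card1 (n k : ℕ) :
    ((Finset.univ.filter (fun Y : Fin n → Fin k → Bool =>
        (Finset.univ.filter (fun i : Fin n => ∀ j, Y i j = true)).card = 1)).card : ℝ) = n * MM k ^ (n-1) := by
  rw [card_filter]
  push_cast
  rw [sum_congr rfl (fun X _ => (exact_one (fun i : Fin n => ones (X i))).symm), sum_comm]
  have : ∀ i : Fin n, ∑ X : Fin n → V k, ∏ r, (if r = i then (if ones (X r) then 1 else 0) else (if ones (X r) then 0 else (1:ℝ))) = MM k ^ (n-1) := by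
    intro i
    rw [sum_prod_fun (fun r (x : V k) => if r = i then (if ones x then 1 else 0) else (if ones x then 0 else (1:ℝ)))]
    have h2 : ∀ r, ∑ x : V k, (if r = i then (if ones x then 1 else 0) else (if ones x then 0 else (1:ℝ))) =
        if r = i then 1 else MM k := by
      intro r
      split_ifs <;> rw [sum_ones] <;> ring
    simp only [h2]
    rw [← mul_prod_erase univ _ (mem_univ i), if_pos rfl, one_mul]
    rw [prod_congr rfl (fun r hr => if_neg (ne_of_mem_erase hr)), prod_const, card_erase_of_mem (mem_univ i)]
    simp
  rw [sum_congr rfl fun i _ => this i]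
  simp

/-- signed block density -/
noncomputable def psi (n k : ℕ) (X : Fin n → Fin k → Bool) : ℝ :=
  (if DISJ n k X then -1 else 1) * sigmaD n k X

lemma psi_eq {n k : ℕ} (hn : 0 < n) (hk : 0 < k) (X : Fin n → V k) :
    psi n k X = (1 / (2 * n * MM k ^ n)) *
      (MM k * (if (univ.filter (fun i => ones (X i))).card = 1 then 1 else 0) -
        n * (if (univ.filter (fun i => ones (X i))).card = 0 then 1 else 0)) := by
  have hM : 0 < MM k := by
    unfold MM
    have : (1:ℝ) < 2 ^ k := one_lt_pow₀ (by norm_num) (by omega)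
    linarith
  have hn' : (0:ℝ) < n := by exact_mod_cast hn
  have hpow : MM k ^ n = MM k ^ (n-1) * MM k := by
    rw [← pow_succ]; congr 1; omega
  have hp : 0 < MM k ^ (n-1) := pow_pos hM _
  have h0 : (∀ i, ∃ j, X i j = false) ↔ (univ.filter (fun i => ones (X i))).card = 0 := by
    rw [card_eq_zero, filter_eq_empty_iff]
    simp only [not_ones, mem_univ, true_implies]
  unfold psi sigmaD sigma0 sigma1 DISJ
  rw [card0, card1, hpow]
  simp only [decide_eq_true_eq]
  by_cases h : (univ.filter (fun i => ones (X i))).card = 0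
  · have hh := h0.2 h
    have h1 : ¬ (univ.filter (fun i => ones (X i))).card = 1 := by omega
    rw [if_pos hh, if_pos hh, if_neg h1, if_neg h1, if_pos h]
    field_simp
    ring
  · have hh : ¬ (∀ i, ∃ j, X i j = false) := fun a => h (h0.1 a)
    rw [if_neg hh, if_neg hh, if_neg h]
    by_cases h1 : (univ.filter (fun i => ones (X i))).card = 1
    · rw [if_pos h1, if_pos h1]
      field_simp
      ring
    · rw [if_neg h1, if_neg h1]
      ring

/-- row weight -/
def wr (z s : Bool) (o : Prop) [Decidable o] (y : Bool) : ℝ :=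
  if z then (if o ∧ y = false then 1 else 0) else if s then (if o then 1 else 0) else (if o then 0 else 1)

def hz (M : ℝ) (z : Bool) : ℝ := if z then M - 1 else -1

noncomputable def ss {n : ℕ} (M : ℝ) (z : Fin n → Bool) : ℝ := ∑ r, hz M (z r)

lemma ident {n : ℕ} (M : ℝ) (o : Fin n → Prop) [DecidablePred o] (y : Fin n → Bool) :
    M * (if (univ.filter (fun i => o i ∧ y i = true)).card = 1 then 1 else 0) -
        n * (if (univ.filter (fun i => o i ∧ y i = true)).card = 0 then 1 else 0) =
    ∑ z : Fin n → Bool, ss M z * ∏ r, wr (z r) false (o r) (y r) -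
    M * ∑ z : Fin n → Bool, ∑ i, if z i then 0 else sg (y i) * ∏ r, wr (z r) (decide (i = r)) (o r) (y r) := by
  have h1 : ∑ z : Fin n → Bool, ss M z * ∏ r, wr (z r) false (o r) (y r) =
      (M * (∑ i, if o i then 1 else 0) - n) * ∏ r, if o r ∧ y r = true then 0 else (1:ℝ) := by
    rw [sum_eq_single (fun r => decide (o r))]
    · congr 1
      · unfold ss hz
        rw [mul_sum]
        have : (n:ℝ) = ∑ _i : Fin n, 1 := by simp
        rw [this, ← sum_sub_distrib]
        apply sum_congr rfl
        intro i _
        by_cases h : o i <;> simp [h]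
      · apply prod_congr rfl
        intro r _
        unfold wr
        by_cases h : o r <;> cases y r <;> simp [h]
    · intro z _ hz
      obtain ⟨r, hr⟩ := Function.ne_iff.1 hz
      rw [prod_eq_zero (mem_univ r), mul_zero]
      unfold wr
      by_cases h : o r <;> cases hzr : z r <;> simp [h, hzr] at hr ⊢
    · simp
  have h2 : ∀ i, ∑ z : Fin n → Bool, (if z i then 0 else sg (y i) * ∏ r, wr (z r) (decide (i = r)) (o r) (y r)) =
      (if o i then sg (y i) else 0) * ∏ r, (if i = r then 1 else if o r ∧ y r = true then 0 else (1:ℝ)) := by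
    intro i
    have : ∀ z : Fin n → Bool, (if z i then 0 else sg (y i) * ∏ r, wr (z r) (decide (i = r)) (o r) (y r)) =
       sg (y i) * ∏ r, (if i = r ∧ z r = true then 0 else wr (z r) (decide (i = r)) (o r) (y r)) := by
      intro z
      by_cases h : z i = true
      · rw [if_pos h, prod_eq_zero (mem_univ i), mul_zero]
        simp [h]
      · rw [if_neg h]
        congr 1
        apply prod_congr rfl
        intro r _
        rw [if_neg]
        rintro ⟨rfl, h'⟩
        exact h h'
    simp only [this]
    rw [← mul_sum, sum_prod_fun (fun r z => if i = r ∧ z = true then 0 else wr z (decide (i = r)) (o r) (y r))]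
    have h3 : ∀ r, ∑ z, (if i = r ∧ z = true then 0 else wr z (decide (i = r)) (o r) (y r)) =
        (if i = r then (if o r then 1 else 0) else 1) * (if i = r then 1 else if o r ∧ y r = true then 0 else (1:ℝ)) := by
      intro r
      simp only [Fintype.sum_bool, wr]
      by_cases h : o r <;> by_cases hi : i = r <;> cases y r <;> simp [h, hi]
    simp only [h3]
    rw [prod_mul_distrib]
    have : ∏ r, (if i = r then (if o r then 1 else 0) else (1:ℝ)) = if o i then 1 else 0 := by
      simp [prod_ite_eq]
    rw [this]
    split_ifs <;> ring
  rw [h1, sum_comm, sum_congr rfl fun i _ => h2 i]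
  by_cases hc : (univ.filter (fun i => o i ∧ y i = true)).card = 0
  · have hc1 : ¬ (univ.filter (fun i => o i ∧ y i = true)).card = 1 := by omega
    rw [if_pos hc, if_neg hc1]
    rw [card_eq_zero, filter_eq_empty_iff] at hc
    have : ∀ r, ¬ (o r ∧ y r = true) := fun r => hc (mem_univ r)
    simp only [this, if_false, ite_self, prod_const_one, mul_one]
    have e : ∀ i, (if o i then sg (y i) else 0) = if o i then 1 else 0 := by
      intro i
      have := this i
      split_ifs with h
      · simp only [h, true_and] at this
        simp [sg, this]
      · rfl
    simp only [e]
    ring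
  · rw [if_neg hc]
    have hp : ∏ r, (if o r ∧ y r = true then 0 else (1:ℝ)) = 0 := by
      rw [card_eq_zero, filter_eq_empty_iff] at hc
      push Not at hc
      obtain ⟨r, _, hr⟩ := hc
      exact prod_eq_zero (mem_univ r) (if_pos hr)
    rw [hp, ← exact_one]
    have e : ∀ i, (if o i then sg (y i) else 0) * ∏ r, (if i = r then 1 else if o r ∧ y r = true then 0 else (1:ℝ))
       = - ∏ r, (if r = i then (if o r ∧ y r = true then 1 else 0) else (if o r ∧ y r = true then 0 else (1:ℝ))) := by
      intro i
      rw [← mul_prod_erase univ _ (mem_univ i), if_pos rfl, one_mul]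
      rw [← mul_prod_erase univ (fun r => if r = i then _ else _) (mem_univ i), if_pos rfl]
      have e1 : ∏ r ∈ univ.erase i, (if i = r then 1 else if o r ∧ y r = true then 0 else (1:ℝ)) =
        ∏ r ∈ univ.erase i, (if o r ∧ y r = true then 0 else (1:ℝ)) :=
        prod_congr rfl fun r hr => if_neg (ne_of_mem_erase hr).symm
      have e2 : ∏ r ∈ univ.erase i, (if r = i then (if o r ∧ y r = true then 1 else 0) else (if o r ∧ y r = true then 0 else (1:ℝ))) =
        ∏ r ∈ univ.erase i, (if o r ∧ y r = true then 0 else (1:ℝ)) :=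
        prod_congr rfl fun r hr => if_neg (ne_of_mem_erase hr)
      rw [e1, e2]
      by_cases hy : y i = true
      · by_cases ho : o i <;> simp [ho, hy, sg]
      · by_cases ho : o i
        · simp only [hy, ho, if_true, and_false, if_false, sg]
          have : ∏ r ∈ univ.erase i, (if o r ∧ y r = true then 0 else (1:ℝ)) = 0 := by
            rw [← mul_prod_erase univ _ (mem_univ i), if_neg (fun h => hy h.2), one_mul] at hp
            exact hp
          rw [this]; simp
        · simp [ho]
    simp only [e, sum_neg_distrib]
    ring

end XD
set_option linter.unusedSectionVars false
namespace XD

noncomputable def wt {n : ℕ} (M : ℝ) (z : Fin n → Bool) : ℝ := ∏ r, if z r then 1 else M - 1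
noncomputable def bb {n : ℕ} (z : Fin n → Bool) : ℝ := ∑ r, if z r then 0 else (1:ℝ)

lemma wt_nonneg {n : ℕ} {M : ℝ} (hM : 1 ≤ M) (z : Fin n → Bool) : 0 ≤ wt M z := by
  unfold wt
  apply prod_nonneg
  intro r _
  split_ifs <;> linarith

lemma wt_cons {n : ℕ} (M : ℝ) (b : Bool) (z : Fin n → Bool) :
    wt M (Fin.cons b z : Fin (n+1) → Bool) = (if b then 1 else M - 1) * wt M z := by
  unfold wt; rw [Fin.prod_univ_succ]; simp

lemma ss_cons {n : ℕ} (M : ℝ) (b : Bool) (z : Fin n → Bool) :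
    ss M (Fin.cons b z : Fin (n+1) → Bool) = hz M b + ss M z := by
  unfold ss; rw [Fin.sum_univ_succ]; simp

lemma bb_cons {n : ℕ} (b : Bool) (z : Fin n → Bool) :
    bb (Fin.cons b z : Fin (n+1) → Bool) = (if b then 0 else 1) + bb z := by
  unfold bb; rw [Fin.sum_univ_succ]; simp

lemma mom0 (M : ℝ) (n : ℕ) : ∑ z : Fin n → Bool, wt M z = M ^ n := by
  induction n with
  | zero => simp [wt]
  | succ n ih =>
    rw [sum_cons]
    simp only [Fintype.sum_bool, wt_cons, ← mul_sum, ih]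
    simp; ring

lemma mom2 (M : ℝ) (n : ℕ) : ∑ z : Fin n → Bool, wt M z * (ss M z)^2 = n * (M-1) * M ^ n := by
  induction n with
  | zero => simp [wt, ss]
  | succ n ih =>
    rw [sum_cons]
    simp only [Fintype.sum_bool, wt_cons, ss_cons, ← sum_add_distrib]
    have : ∀ z : Fin n → Bool, (if True then 1 else M - 1) * wt M z * (hz M true + ss M z) ^ 2 +
        (if false = true then 1 else M - 1) * wt M z * (hz M false + ss M z) ^ 2 =
        M * (wt M z * (ss M z)^2) + M * (M-1) * wt M z := by
      intro z; simp [hz]; ring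
    rw [sum_congr rfl fun z _ => this z, sum_add_distrib, ← mul_sum, ← mul_sum, ih, mom0]
    push_cast; ring

lemma momb (M : ℝ) (n : ℕ) : M * ∑ z : Fin n → Bool, wt M z * bb z = n * (M-1) * M ^ n := by
  induction n with
  | zero => simp [wt, bb]
  | succ n ih =>
    rw [sum_cons]
    simp only [Fintype.sum_bool, wt_cons, bb_cons, ← sum_add_distrib]
    have : ∀ z : Fin n → Bool, (if True then 1 else M - 1) * wt M z * ((if True then 0 else 1) + bb z) +
        (if false = true then 1 else M - 1) * wt M z * ((if false = true then 0 else 1) + bb z) =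
        M * (wt M z * bb z) + (M-1) * wt M z := by
      intro z; simp; ring
    rw [sum_congr rfl fun z _ => this z, sum_add_distrib, ← mul_sum, ← mul_sum, mom0, ih]
    push_cast; ring

lemma bb_nonneg {n : ℕ} (z : Fin n → Bool) : 0 ≤ bb z := by
  unfold bb
  apply sum_nonneg
  intro r _
  split_ifs <;> norm_num

lemma num {n : ℕ} (hn : 0 < n) {M : ℝ} (hM : 1 ≤ M) :
    ∑ z : Fin n → Bool, (1 / (2 * n * M^n)) * |ss M z| * wt M z +
      ∑ z : Fin n → Bool, (M / (2 * n * M^n)) * Real.sqrt (bb z) * wt M z ≤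
      (Real.sqrt M + 1) * Real.sqrt (M - 1) / (2 * Real.sqrt n) := by
  have hn' : (0:ℝ) < n := by exact_mod_cast hn
  have hM0 : 0 < M := by linarith
  have hp : 0 < M ^ n := pow_pos hM0 n
  have hw := wt_nonneg (n := n) hM
  have sn := Real.sqrt_pos.2 hn'
  have sn2 := Real.sq_sqrt hn'.le
  have sM := Real.sqrt_pos.2 hM0
  have sM2 := Real.sq_sqrt hM0.le
  have s1 := Real.sqrt_nonneg (M-1)
  have s12 := Real.sq_sqrt (show 0 ≤ M - 1 by linarith)
  have c1 : ∑ z : Fin n → Bool, |ss M z| * wt M z ≤ M^n * (Real.sqrt n * Real.sqrt (M-1)) := by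
    apply (abs_le_of_sq_le_sq' _ (by positivity)).2
    have := Finset.sum_sq_le_sum_mul_sum_of_sq_le_mul (univ : Finset (Fin n → Bool))
      (r := fun z => |ss M z| * wt M z) (f := fun z => wt M z) (g := fun z => wt M z * (ss M z)^2)
      (fun z _ => hw z) (fun z _ => mul_nonneg (hw z) (sq_nonneg _))
      (fun z _ => by rw [mul_pow, sq_abs]; apply le_of_eq; ring)
    refine this.trans (le_of_eq ?_)
    rw [mom0, mom2, mul_pow, mul_pow, sn2, s12]
    ring
  have c2 : M * ∑ z : Fin n → Bool, Real.sqrt (bb z) * wt M z ≤ M^n * (Real.sqrt n * Real.sqrt (M-1) * Real.sqrt M) := by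
    apply (abs_le_of_sq_le_sq' _ (by positivity)).2
    have := Finset.sum_sq_le_sum_mul_sum_of_sq_le_mul (univ : Finset (Fin n → Bool))
      (r := fun z => Real.sqrt (bb z) * wt M z) (f := fun z => wt M z) (g := fun z => wt M z * bb z)
      (fun z _ => hw z) (fun z _ => mul_nonneg (hw z) (bb_nonneg z))
      (fun z _ => by rw [mul_pow, Real.sq_sqrt (bb_nonneg z)]; apply le_of_eq; ring)
    rw [mul_pow]
    refine (mul_le_mul_of_nonneg_left this (sq_nonneg M)).trans (le_of_eq ?_)
    rw [mom0, mul_pow, mul_pow, mul_pow, sn2, s12, sM2]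
    have := momb M n
    linear_combination (M^n * M) * this
  have e1 : ∑ z : Fin n → Bool, (1 / (2 * n * M^n)) * |ss M z| * wt M z = (1 / (2 * n * M^n)) * ∑ z : Fin n → Bool, |ss M z| * wt M z := by
    rw [mul_sum]; exact sum_congr rfl fun z _ => by ring
  have e2 : ∑ z : Fin n → Bool, (M / (2 * n * M^n)) * Real.sqrt (bb z) * wt M z = (1 / (2 * n * M^n)) * (M * ∑ z : Fin n → Bool, Real.sqrt (bb z) * wt M z) := by
    rw [mul_sum, mul_sum]; exact sum_congr rfl fun z _ => by ring
  rw [e1, e2, ← mul_add]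
  refine (mul_le_mul_of_nonneg_left (add_le_add c1 c2) (by positivity)).trans (le_of_eq ?_)
  rw [one_div, ← div_eq_inv_mul, div_eq_div_iff (by positivity) (by positivity)]
  linear_combination (2 * M^n * Real.sqrt (M-1) * (1 + Real.sqrt M)) * sn2

end XD
set_option linter.unusedSectionVars false
namespace XD

noncomputable def coef {n : ℕ} (M : ℝ) (e : Bool × (Fin n → Bool)) : ℝ :=
  if e.1 then -(M / (2 * n * M^n)) else (1 / (2 * n * M^n)) * ss M e.2

noncomputable def bt {n p : ℕ} (e : Bool × (Fin n → Bool)) (x : Fin n → V p) (y : Fin n → Bool) : ℝ :=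
  if e.1 then ∑ i, (if e.2 i then 0 else sg (y i) * ∏ r, wr (e.2 r) (decide (i = r)) (ones (x r)) (y r))
  else ∏ r, wr (e.2 r) false (ones (x r)) (y r)

lemma block {n p : ℕ} (hn : 0 < n) (x : Fin n → V p) (y : Fin n → Bool) :
    psi n (p+1) (cns y x) = ∑ e : Bool × (Fin n → Bool), coef (MM (p+1)) e * bt e x y := by
  rw [psi_eq hn (Nat.succ_pos p)]
  have : (fun i => ones (cns y x i)) = fun i => (ones (x i) ∧ y i = true) := by
    funext i
    simp only [cns, eq_iff_iff, ones_cons]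
    tauto
  have h1 : univ.filter (fun i => ones (cns y x i)) = univ.filter (fun i => (ones (x i) ∧ y i = true)) := by
    apply filter_congr
    intro i _
    simp only [cns, ones_cons]
    tauto
  rw [h1, ident, Fintype.sum_prod_type, Fintype.sum_bool]
  unfold coef bt
  simp only [if_true, Bool.false_eq_true, if_false, mul_assoc, ← mul_sum]
  ring

section
variable {m : ℕ} {nn : Fin m → ℕ}

abbrev RR (nn : Fin m → ℕ) := Σ i : Fin m, Fin (nn i)
abbrev EE (nn : Fin m → ℕ) := ∀ i : Fin m, Bool × (Fin (nn i) → Bool)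

def dl (η : EE nn) : Fin m → Bool := fun i => (η i).1

def lm (η : EE nn) (r : RR nn) : Option (J1 (dl η)) :=
  if h : dl η r.1 = true then (if (η r.1).2 r.2 = true then none else some ⟨r.1, h⟩) else none

def vm {p : ℕ} (η : EE nn) (r : RR nn) (x : V p) (y : Bool) : ℝ :=
  wr ((η r.1).2 r.2) false (ones x) y

lemma wr_nonneg (z s : Bool) (o : Prop) [Decidable o] (y : Bool) : 0 ≤ wr z s o y := by
  unfold wr
  split_ifs <;> norm_num

lemma kw_pos {p : ℕ} (η : EE nn) (c : J1 (dl η) → RR nn) (b : J1 (dl η)) (j : Fin (nn b.1)) (x : V p) (y : Bool) :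
    kw (lm η) (vm η) c ⟨b.1, j⟩ x y = wr ((η b.1).2 j) (decide (c b = ⟨b.1, j⟩)) (ones x) y := by
  unfold kw lm vm wr
  have hb := b.2
  simp only [hb, dif_pos]
  by_cases hz : (η b.1).2 j = true
  · simp [hz]
  · simp [hz]

lemma kw_neg {p : ℕ} (η : EE nn) (c : J1 (dl η) → RR nn) (b : J0 (dl η)) (j : Fin (nn b.1)) (x : V p) (y : Bool) :
    kw (lm η) (vm η) c ⟨b.1, j⟩ x y = wr ((η b.1).2 j) false (ones x) y := by
  unfold kw lm vm
  have hb := b.2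
  rw [dif_neg hb, Option.elim_none]

lemma lm_some (η : EE nn) (b : J1 (dl η)) (r : RR nn) : lm η r = some b ↔ r.1 = b.1 ∧ (η r.1).2 r.2 = false := by
  unfold lm
  constructor
  · intro h
    split_ifs at h with h1 h2
    simp only [Option.some.injEq] at h
    exact ⟨by rw [← h], by simpa using h2⟩
  · rintro ⟨h1, h2⟩
    have hb : dl η r.1 = true := by rw [h1]; exact b.2
    rw [dif_pos hb, if_neg (by simp [h2])]
    congr 1
    exact Subtype.ext h1

lemma fib_lm (η : EE nn) (b : J1 (dl η)) :
    fib (lm η) b = (univ.filter (fun j => (η b.1).2 j = false)).map (Function.Embedding.sigmaMk b.1) := by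
  ext r
  simp only [fib, mem_filter, mem_univ, true_and, lm_some, mem_map, Function.Embedding.sigmaMk_apply]
  constructor
  · intro h
    obtain ⟨i, j⟩ := r
    obtain ⟨h1, h2⟩ := h
    simp only at h1
    subst h1
    exact ⟨j, h2, rfl⟩
  · rintro ⟨j, h, rfl⟩
    exact ⟨rfl, h⟩

lemma claim {p : ℕ} (η : EE nn) (X : RR nn → V p) (Y : RR nn → Bool) :
    ∑ c ∈ secs (lm η), (∏ r, kw (lm η) (vm η) c r (X r) (Y r)) * ∏ b, sg (Y (c b)) =
      ∏ i, bt (η i) (fun j => X ⟨i, j⟩) (fun j => Y ⟨i, j⟩) := by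
  rw [← Fintype.prod_subtype_mul_prod_subtype (fun b => dl η b = true)]
  have h1 : ∀ b : J1 (dl η), bt (η b.1) (fun j => X ⟨b.1, j⟩) (fun j => Y ⟨b.1, j⟩) =
      ∑ r ∈ fib (lm η) b, (∏ j, wr ((η b.1).2 j) (decide (r = ⟨b.1, j⟩)) (ones (X ⟨b.1, j⟩)) (Y ⟨b.1, j⟩)) * sg (Y r) := by
    intro b
    rw [fib_lm, sum_map, sum_filter]
    unfold bt
    have hb : (η b.1).1 = true := b.2
    rw [if_pos hb]
    apply sum_congr rfl
    intro j _
    simp only [Function.Embedding.sigmaMk_apply]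
    by_cases hz : (η b.1).2 j = true
    · simp [hz]
    · have hz' : (η b.1).2 j = false := by simpa using hz
      rw [if_neg hz, if_pos hz', mul_comm]
      congr 1
      apply prod_congr rfl
      intro r _
      congr 1
      simp
  have h2 : ∀ b : J0 (dl η), bt (η b.1) (fun j => X ⟨b.1, j⟩) (fun j => Y ⟨b.1, j⟩) =
      ∏ j, wr ((η b.1).2 j) false (ones (X ⟨b.1, j⟩)) (Y ⟨b.1, j⟩) := by
    intro b
    unfold bt
    have hb : ¬ (η b.1).1 = true := b.2
    rw [if_neg hb]
  rw [prod_congr rfl fun b _ => h1 b, prod_congr rfl fun b _ => h2 b, prod_univ_sum, sum_mul]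
  have hs : secs (lm η) = Fintype.piFinset (fun b => fib (lm η) b) := rfl
  rw [hs]
  apply sum_congr rfl
  intro c _
  rw [Fintype.prod_sigma, ← Fintype.prod_subtype_mul_prod_subtype (fun b => dl η b = true)]
  simp only [kw_pos, kw_neg, prod_mul_distrib]
  rw [mul_right_comm]

noncomputable def Bd {n : ℕ} (M : ℝ) (e : Bool × (Fin n → Bool)) : ℝ :=
  (if e.1 then Real.sqrt (bb e.2) else 1) * wt M e.2

lemma bound_eq {p : ℕ} (η : EE nn) : bound (lm η) (vm (p := p) η) = ∏ i, Bd (MM (p+1)) (η i) := by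
  unfold bound Bd
  rw [prod_mul_distrib]
  congr 1
  · rw [← Fintype.prod_subtype_mul_prod_subtype (fun b => dl η b = true)]
    have : ∏ b : J0 (dl η), (if (η b.1).1 = true then Real.sqrt (bb (η b.1).2) else 1) = 1 := by
      apply Fintype.prod_eq_one
      intro b
      exact if_neg b.2
    rw [this, mul_one]
    apply prod_congr rfl
    intro b _
    have hb : (η b.1).1 = true := b.2
    rw [if_pos hb, fib_lm, card_map, card_filter]
    unfold bb
    congr 1
    push_cast
    apply sum_congr rfl
    intro j _
    cases (η b.1).2 j <;> simp
  · rw [Fintype.prod_sigma]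
    apply prod_congr rfl
    intro i _
    unfold wt
    apply prod_congr rfl
    intro j _
    unfold tot lm vm wr
    by_cases h : dl η i = true <;> by_cases hz : (η i).2 j = true
    · simp only [h, hz, dif_pos, if_true, Option.elim_none, Fintype.sum_bool]
      simp only [and_true, Bool.true_eq_false, and_false, if_false, zero_add, sum_ones]
      ring
    · simp only [h, hz, dif_pos, if_false, Option.elim_some, MM_succ, Bool.false_eq_true]
      ring
    · rw [dif_neg h]
      simp only [hz, if_true, Option.elim_none, Fintype.sum_bool, not_false_eq_true]
      simp only [and_true, Bool.true_eq_false, and_false, if_false, zero_add, sum_ones]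
      ring
    · rw [dif_neg h]
      simp only [hz, if_false, Option.elim_none, Fintype.sum_bool, not_false_eq_true, Bool.false_eq_true]
      simp only [sum_add_distrib, sum_ones, MM_succ]
      ring

lemma TT_claim {p : ℕ} (η : EE nn) (F : (RR nn → V p) → (RR nn → Bool) → ℝ) (hF : Cyl (RR nn) p F) :
    |∑ X, ∑ Y, (∏ i, bt (η i) (fun j => X ⟨i, j⟩) (fun j => Y ⟨i, j⟩)) * F X Y| ≤ ∏ i, Bd (MM (p+1)) (η i) := by
  rw [← bound_eq]
  refine le_of_eq_of_le ?_ (mainBound p _ _ (lm η) (vm η) (fun r x y => wr_nonneg _ _ _ _) F hF)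
  congr 1
  unfold TT
  refine sum_congr rfl fun X _ => sum_congr rfl fun Y _ => ?_
  rw [← claim, sum_mul]

lemma total {p : ℕ} (hnn : ∀ i, 0 < nn i) (F : (RR nn → V p) → (RR nn → Bool) → ℝ) (hF : Cyl (RR nn) p F) :
    |∑ X : RR nn → V p, ∑ Y : RR nn → Bool,
      (∏ i, psi (nn i) (p+1) (cns (fun j => Y ⟨i, j⟩) (fun j => X ⟨i, j⟩))) * F X Y| ≤
      ∏ i, (Real.sqrt (MM (p+1)) + 1) * Real.sqrt (MM (p+1) - 1) / (2 * Real.sqrt (nn i)) := by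
  have e1 : ∑ X : RR nn → V p, ∑ Y : RR nn → Bool,
      (∏ i, psi (nn i) (p+1) (cns (fun j => Y ⟨i, j⟩) (fun j => X ⟨i, j⟩))) * F X Y =
      ∑ η : EE nn, (∏ i, coef (MM (p+1)) (η i)) *
        ∑ X, ∑ Y, (∏ i, bt (η i) (fun j => X ⟨i, j⟩) (fun j => Y ⟨i, j⟩)) * F X Y := by
    have : ∀ (X : RR nn → V p) (Y : RR nn → Bool),
      (∏ i, psi (nn i) (p+1) (cns (fun j => Y ⟨i, j⟩) (fun j => X ⟨i, j⟩))) * F X Y =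
       ∑ η : EE nn, (∏ i, coef (MM (p+1)) (η i)) * ((∏ i, bt (η i) (fun j => X ⟨i, j⟩) (fun j => Y ⟨i, j⟩)) * F X Y) := by
      intro X Y
      rw [prod_congr rfl fun i _ => block (hnn i) _ _, prod_univ_sum, Fintype.piFinset_univ, sum_mul]
      apply sum_congr rfl
      intro η _
      rw [prod_mul_distrib]
      ring
    simp only [this, mul_sum]
    rw [sum_congr rfl fun X _ => sum_comm, sum_comm]
  rw [e1]
  have hM : 1 ≤ MM (p+1) := by
    rw [MM_succ]; linarith [MM_nonneg p]
  calc _ ≤ ∑ η : EE nn, ∏ i, (|coef (MM (p+1)) (η i)| * Bd (MM (p+1)) (η i)) := by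
        refine (abs_sum_le_sum_abs _ _).trans (sum_le_sum fun η _ => ?_)
        rw [abs_mul, abs_prod, prod_mul_distrib]
        exact mul_le_mul_of_nonneg_left (TT_claim η F hF) (prod_nonneg fun _ _ => abs_nonneg _)
    _ = ∏ i, ∑ e : Bool × (Fin (nn i) → Bool), |coef (MM (p+1)) e| * Bd (MM (p+1)) e := by
        rw [prod_univ_sum, Fintype.piFinset_univ]
    _ ≤ _ := by
        apply prod_le_prod
        · intro i _
          refine sum_nonneg fun e _ => mul_nonneg (abs_nonneg _) ?_
          unfold Bd
          refine mul_nonneg ?_ (wt_nonneg hM _)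
          split_ifs
          · positivity
          · norm_num
        · intro i _
          refine le_trans (le_of_eq ?_) (num (hnn i) hM)
          rw [Fintype.sum_prod_type, Fintype.sum_bool, add_comm]
          have hn' : (0:ℝ) < nn i := by exact_mod_cast hnn i
          have hp : 0 < MM (p+1) := by linarith
          have c1 : 0 ≤ 1 / (2 * (nn i) * MM (p+1) ^ (nn i)) := by positivity
          have c2 : 0 ≤ MM (p+1) / (2 * (nn i) * MM (p+1) ^ (nn i)) := by positivity
          unfold coef Bd
          simp only [if_true, Bool.false_eq_true, if_false, abs_mul ((1:ℝ) / _), abs_neg, abs_of_nonneg c1, abs_of_nonneg c2, one_mul]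
          simp only [mul_assoc]

lemma chi_cyl {p : ℕ} (S : Finset (Fin (p+1))) (χ : (∀ i, Fin (nn i) → Fin (p+1) → Bool) → ℝ)
    (h : IsCylinderT nn (p+1) S χ) :
    Cyl (RR nn) p (fun X Y => χ (fun i j => cns Y X ⟨i, j⟩)) := by
  obtain ⟨φ, h1, h2, h3⟩ := h
  refine ⟨fun X => if (0 : Fin (p+1)) ∈ S then φ 0 (fun i j => cns (fun _ => false) X ⟨i, j⟩) else 1,
    fun j X Y => if j.succ ∈ S then φ j.succ (fun i j => cns Y X ⟨i, j⟩) else 1, ?_, ?_, ?_, ?_⟩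
  · intro X
    dsimp only
    split_ifs with h
    · rcases h1 _ h (fun i j => cns (fun _ => false) X ⟨i, j⟩) with h | h <;> rw [h] <;> norm_num
    · norm_num
  · intro j X Y
    dsimp only
    split_ifs with h
    · rcases h1 _ h (fun i j => cns Y X ⟨i, j⟩) with h | h <;> rw [h] <;> norm_num
    · norm_num
  · intro j X X' Y hX
    dsimp only
    split_ifs with h
    · apply h2 _ h
      intro i i' j' hj'
      simp only [cns]
      refine Fin.cases ?_ (fun l => ?_) j' hj'
      · intro _; simp
      · intro hl
        simp only [Fin.cons_succ]
        exact hX _ _ (fun h => hl (by rw [h]))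
    · rfl
  · intro X Y
    dsimp only
    rw [h3]
    have : ∏ j ∈ S, φ j (fun i j => cns Y X ⟨i, j⟩) = ∏ j, if j ∈ S then φ j (fun i j => cns Y X ⟨i, j⟩) else 1 := by
      rw [prod_ite_mem, univ_inter]
    rw [this, Fin.prod_univ_succ]
    congr 1
    split_ifs with h
    · apply h2 _ h
      intro i i' j' hj'
      obtain ⟨l, rfl⟩ := Fin.exists_succ_eq.2 hj'
      simp [cns]
    · rfl

lemma parity (P : Fin m → Bool) :
    (if decide ((univ.filter (fun i => P i = true)).card % 2 = 1) = true then (-1:ℝ) else 1) =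
      ∏ i, if P i then (-1:ℝ) else 1 := by
  rw [prod_ite, prod_const, prod_const_one, mul_one]
  simp only [decide_eq_true_eq]
  split_ifs with h
  · exact (Odd.neg_one_pow (Nat.odd_iff.2 h)).symm
  · exact (Even.neg_one_pow (Nat.even_iff.2 (by omega))).symm

end
end XD

/-- discrepancy of the XOR of `m` independent set disjointness
instances under `⊗ σ_{n_i,k}`. -/
theorem stmt_9 (m k : ℕ) (hm : 0 < m) (hk : 0 < k)
    (nn : Fin m → ℕ) (hnn : ∀ i, 0 < nn i) :
    discT nn k
      (fun X => decide
        ((Finset.univ.filter (fun i : Fin m => DISJ (nn i) k (X i) = true)).card % 2 = 1))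
      (fun X => ∏ i, sigmaD (nn i) k (X i)) ≤
      ∏ i : Fin m,
        (Real.sqrt ((2 : ℝ) ^ k - 1) + 1) * Real.sqrt ((2 : ℝ) ^ k - 2) /
          (2 * Real.sqrt (nn i)) := by
  obtain ⟨p, rfl⟩ : ∃ p, k = p + 1 := ⟨k - 1, by omega⟩
  unfold discT
  apply Real.sSup_le
  · rintro t ⟨S, χ, hχ, rfl⟩
    have hT := XD.total hnn _ (XD.chi_cyl S χ hχ)
    have e2 : (2:ℝ)^(p+1) - 2 = XD.MM (p+1) - 1 := by unfold XD.MM; ring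
    rw [e2]
    refine le_of_eq_of_le ?_ hT
    congr 1
    rw [← Equiv.sum_comp (Equiv.piCurry (fun (i : Fin m) (_ : Fin (nn i)) => Fin (p+1) → Bool)), XD.sum_cns, sum_comm]
    refine sum_congr rfl fun X _ => sum_congr rfl fun Y _ => ?_
    rw [XD.parity, ← prod_mul_distrib]
    rfl
  · exact prod_nonneg fun i _ => by positivity
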